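/- arXiv:math/0303312 — 2 statements merged into one kernel-verified Lean document; each statement's English description precedes it below -/
import Mathlib

section
/- Let p and q be positive integers. Then S_ann-nc(p,q) is the smallest subset of S([p+q]) which contains S_disc-nc(p+q) and is invariant under conjugation with γ_ext and with γ_int. -/
/-- The permutation induced by `f` on the subset `B`: an element `b` is sent to the first
element of the sequence `f b, f (f b), f (f (f b)), ...` that lies in `B`
(and is left fixed if no iterate ever returns to `B`). -/
noncomputable def induced {α : Type*} (f : α → α) (B : Set α) (b : α) : α := by
  classical
  exact if h : ∃ k, 0 < k ∧ f^[k] b ∈ B then f^[Nat.find h] b else b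

/-- `A` is an orbit of the permutation `τ`. -/
def IsOrbit {α : Type*} (τ : Equiv.Perm α) (A : Set α) : Prop :=
  ∃ a, A = {b | τ.SameCycle a b}

/-- The number of orbits of `τ` (fixed points count as orbits). -/
noncomputable def numOrbits {α : Type*} (τ : Equiv.Perm α) : ℕ :=
  Set.ncard {A : Set α | IsOrbit τ A}

/-- `induced f S` acts on `a, b, c` as the 3-cycle `(a, b, c)`. -/
def MapsCyc3 {α : Type*} (f : α → α) (S : Set α) (a b c : α) : Prop :=
  induced f S a = b ∧ induced f S b = c ∧ induced f S c = a

/-- `induced f S` acts on `a, b, c, d` as the 4-cycle `(a, b, c, d)`. -/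
def MapsCyc4 {α : Type*} (f : α → α) (S : Set α) (a b c d : α) : Prop :=
  induced f S a = b ∧ induced f S b = c ∧ induced f S c = d ∧ induced f S d = a

/-- `induced f S` acts on `a, b, c, d` as the product of transpositions `(a, c)(b, d)`. -/
def MapsSwap2 {α : Type*} (f : α → α) (S : Set α) (a b c d : α) : Prop :=
  induced f S a = c ∧ induced f S c = a ∧ induced f S b = d ∧ induced f S d = b

/-- `induced f S` acts on `x, y` as the transposition `(x, y)`. -/
def MapsSwap {α : Type*} (f : α → α) (S : Set α) (x y : α) : Prop :=
  induced f S x = y ∧ induced f S y = x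

/-- `σ` is standard with respect to the "forward cycle" `γ₀`, i.e. `σ∣B = γ₀∣B` for
every orbit `B` of `σ`. -/
def DiscStandardRel {n : ℕ} (γ₀ σ : Equiv.Perm (Fin n)) : Prop :=
  ∀ A : Set (Fin n), IsOrbit σ A → ∀ b ∈ A, induced (⇑σ) A b = induced (⇑γ₀) A b

/-- The orbit partition of `σ` has no crossing: there are no `a < b < c < d` with
`a, c` in one orbit and `b, d` in a different orbit. -/
def OrbitsNoCrossing {n : ℕ} (σ : Equiv.Perm (Fin n)) : Prop :=
  ¬ ∃ a b c d : Fin n, a < b ∧ b < c ∧ c < d ∧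
      σ.SameCycle a c ∧ σ.SameCycle b d ∧ ¬ σ.SameCycle a b

/-- Disc non-crossing relative to a given forward cycle `γ₀`. -/
def DiscNCRel {n : ℕ} (γ₀ σ : Equiv.Perm (Fin n)) : Prop :=
  DiscStandardRel γ₀ σ ∧ OrbitsNoCrossing σ

/-- The set `S_disc-nc(n)` of disc non-crossing permutations of `[n]`
(here `[n] = {1, …, n}` is modelled by `Fin n`, and the forward cycle
`γ₀ = (1, 2, …, n)` is `finRotate n`). -/
def DiscNC {n : ℕ} (σ : Equiv.Perm (Fin n)) : Prop :=
  DiscNCRel (finRotate n) σ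

/-- The external points `{1, …, p}` (0-indexed: values `< p`). -/
def extSet (p q : ℕ) : Set (Fin (p + q)) := {i | (i : ℕ) < p}

/-- The internal points `{p+1, …, p+q}` (0-indexed: values `≥ p`). -/
def intSet (p q : ℕ) : Set (Fin (p + q)) := {i | p ≤ (i : ℕ)}

/-- `γ_ext = (1, 2, …, p)`, the forward cycle on the external points. -/
def gammaExt (p q : ℕ) : Equiv.Perm (Fin (p + q)) :=
  ((List.finRange (p + q)).take p).formPerm

/-- `γ_int = (p+1, p+2, …, p+q)`, the forward cycle on the internal points. -/
def gammaInt (p q : ℕ) : Equiv.Perm (Fin (p + q)) :=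
  ((List.finRange (p + q)).drop p).formPerm

/-- `γ = γ_ext · γ_int`. -/
def gammaAnn (p q : ℕ) : Equiv.Perm (Fin (p + q)) := gammaExt p q * gammaInt p q

/-- `λ_{x,y}`: the permutation fixing `x` and `y` and cycling the remaining points as
`(γ_ext(x), γ_ext²(x), …, γ_ext^{p-1}(x), γ_int(y), γ_int²(y), …, γ_int^{q-1}(y))`. -/
def lamPerm (p q : ℕ) (x y : Fin (p + q)) : Equiv.Perm (Fin (p + q)) :=
  (((List.range (p - 1)).map fun k => (gammaExt p q ^ (k + 1)) x) ++
    ((List.range (q - 1)).map fun k => (gammaInt p q ^ (k + 1)) y)).formPerm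

/-- `τ` is standard in `(p,q)`-annular sense. -/
def AnnStandard (p q : ℕ) (τ : Equiv.Perm (Fin (p + q))) : Prop :=
  (∀ A : Set (Fin (p + q)), IsOrbit τ A →
    (∀ b ∈ A ∩ extSet p q,
        induced (⇑τ) (A ∩ extSet p q) b = induced (⇑(gammaExt p q)) (A ∩ extSet p q) b) ∧
    (∀ b ∈ A ∩ intSet p q,
        induced (⇑τ) (A ∩ intSet p q) b = induced (⇑(gammaInt p q)) (A ∩ intSet p q) b)) ∧
  (∀ A : Set (Fin (p + q)), IsOrbit τ A →
    (A ∩ extSet p q).Nonempty → (A ∩ intSet p q).Nonempty →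
    (∃! a, a ∈ A ∩ extSet p q ∧ τ a ∈ intSet p q) ∧
    (∃! a, a ∈ A ∩ intSet p q ∧ τ a ∈ extSet p q))

/-- The annular crossing pattern (AC-1). -/
def AC1 (p q : ℕ) (τ : Equiv.Perm (Fin (p + q))) : Prop :=
  ∃ a b c d : Fin (p + q), List.Pairwise (· ≠ ·) [a, b, c, d] ∧
    MapsCyc4 (⇑(gammaAnn p q)) {a, b, c, d} a b c d ∧
    MapsSwap2 (⇑τ) {a, b, c, d} a b c d

/-- The annular crossing pattern (AC-2). -/
def AC2 (p q : ℕ) (τ : Equiv.Perm (Fin (p + q))) : Prop :=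
  ∃ a b c x y : Fin (p + q), List.Pairwise (· ≠ ·) [a, b, c, x, y] ∧
    x ∈ extSet p q ∧ y ∈ intSet p q ∧
    MapsCyc3 (⇑(lamPerm p q x y)) {a, b, c} a b c ∧
    MapsCyc3 (⇑τ) {a, b, c, x, y} a c b ∧
    MapsSwap (⇑τ) {a, b, c, x, y} x y

/-- The annular crossing pattern (AC-3). -/
def AC3 (p q : ℕ) (τ : Equiv.Perm (Fin (p + q))) : Prop :=
  ∃ a b c d x y : Fin (p + q), List.Pairwise (· ≠ ·) [a, b, c, d, x, y] ∧
    x ∈ extSet p q ∧ y ∈ intSet p q ∧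
    MapsCyc4 (⇑(lamPerm p q x y)) {a, b, c, d} a b c d ∧
    MapsSwap2 (⇑τ) {a, b, c, d, x, y} a b c d ∧
    MapsSwap (⇑τ) {a, b, c, d, x, y} x y

/-- The set `S_ann-nc(p,q)` of `(p,q)`-annular non-crossing permutations. -/
def AnnNC (p q : ℕ) (τ : Equiv.Perm (Fin (p + q))) : Prop :=
  AnnStandard p q τ ∧ ¬ AC1 p q τ ∧ ¬ AC2 p q τ ∧ ¬ AC3 p q τ

/-- A `(p,q)`-connecting set: meets both the external and internal points. -/
def ConnectingBlock (p q : ℕ) (B : Set (Fin (p + q))) : Prop :=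
  (B ∩ extSet p q).Nonempty ∧ (B ∩ intSet p q).Nonempty

/-- `τ` is `(p,q)`-connected: it has a `(p,q)`-connecting orbit. -/
def AnnConnected (p q : ℕ) (τ : Equiv.Perm (Fin (p + q))) : Prop :=
  ∃ A : Set (Fin (p + q)), IsOrbit τ A ∧ ConnectingBlock p q A

/-- A family of blocks has no crossing: no `a < b < c < d` with `a, c` in one block and
`b, d` in a different block. -/
def NoCrossing {n : ℕ} (ρ : Set (Set (Fin n))) : Prop :=
  ¬ ∃ (a b c d : Fin n) (B C : Set (Fin n)), B ∈ ρ ∧ C ∈ ρ ∧ B ≠ C ∧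
      a < b ∧ b < c ∧ c < d ∧ a ∈ B ∧ c ∈ B ∧ b ∈ C ∧ d ∈ C

namespace AnnHelp

open Equiv

section general
variable {α : Type*}

lemma induced_of (f : α → α) (S : Set α) (u : α) (k : ℕ) (hk : 0 < k) (h : f^[k] u ∈ S)
    (hmin : ∀ j, 0 < j → j < k → f^[j] u ∉ S) : induced f S u = f^[k] u := by
  classical
  have hex : ∃ k, 0 < k ∧ f^[k] u ∈ S := ⟨k, hk, h⟩
  unfold induced
  rw [dif_pos hex]
  have : Nat.find hex = k := by
    rw [Nat.find_eq_iff]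
    refine ⟨⟨hk, h⟩, fun j hj hh => hmin j hh.1 hj hh.2⟩
  rw [this]

lemma induced_spec (f : α → α) (S : Set α) (u : α) (hex : ∃ k, 0 < k ∧ f^[k] u ∈ S) :
    ∃ k, 0 < k ∧ f^[k] u ∈ S ∧ (∀ j, 0 < j → j < k → f^[j] u ∉ S) ∧
      induced f S u = f^[k] u := by
  classical
  refine ⟨Nat.find hex, (Nat.find_spec hex).1, (Nat.find_spec hex).2, ?_, ?_⟩
  · intro j hj hlt hS
    exact Nat.find_min hex hlt ⟨hj, hS⟩
  · unfold induced
    rw [dif_pos hex]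

lemma perm_return [Finite α] (f : Perm α) (S : Set α) (u : α) (hu : u ∈ S) :
    ∃ k, 0 < k ∧ (⇑f)^[k] u ∈ S := by
  refine ⟨orderOf f, orderOf_pos f, ?_⟩
  rw [Perm.iterate_eq_pow, pow_orderOf_eq_one]
  exact hu

lemma sc_iter (f : Perm α) (u : α) (k : ℕ) : f.SameCycle u ((⇑f)^[k] u) :=
  ⟨k, by rw [Perm.iterate_eq_pow]; simp⟩

lemma sc_apply (f : Perm α) (u : α) : f.SameCycle u (f u) := sc_iter f u 1

lemma sc_exists [Finite α] {f : Perm α} {u v : α} (h : f.SameCycle u v) :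
    ∃ k, (⇑f)^[k] u = v := by
  obtain ⟨i, _, hi⟩ := h.exists_pow_eq'
  exact ⟨i, by rw [Perm.iterate_eq_pow]; exact hi⟩

lemma induced_mem [Finite α] (f : Perm α) (S : Set α) (u : α) (hu : u ∈ S) :
    induced f S u ∈ S ∧ f.SameCycle u (induced f S u) := by
  obtain ⟨k, hk, hS, _, he⟩ := induced_spec f S u (perm_return f S u hu)
  rw [he]
  exact ⟨hS, sc_iter f u k⟩

lemma induced_one (f : α → α) (S : Set α) (u : α) (h : f u ∈ S) : induced f S u = f u :=
  induced_of f S u 1 one_pos h (by intro j h1 h2; omega)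

lemma closed_reach [Finite α] (f : Perm α) (S T : Set α) (u w : α) (hu : u ∈ T) (hTS : T ⊆ S)
    (hT : ∀ t ∈ T, induced f S t ∈ T) (hw : w ∈ S) (hsc : f.SameCycle u w) : w ∈ T := by
  obtain ⟨k, hk⟩ := sc_exists hsc
  induction k using Nat.strong_induction_on generalizing u with
  | _ k ih =>
    rcases Nat.eq_zero_or_pos k with h0 | hpos
    · subst h0; simpa [← hk] using hu
    · obtain ⟨m, hm, hmS, hmin, he⟩ := induced_spec f S u ⟨k, hpos, by rw [hk]; exact hw⟩
      have hmk : m ≤ k := by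
        by_contra hlt
        exact hmin k hpos (by omega) (by rw [hk]; exact hw)
      have hmT : (⇑f)^[m] u ∈ T := by rw [← he]; exact hT u hu
      have h2 : (⇑f)^[k - m] ((⇑f)^[m] u) = w := by
        rw [← Function.iterate_add_apply, Nat.sub_add_cancel hmk]; exact hk
      exact ih (k - m) (by omega) _ hmT (h2 ▸ sc_iter f _ _) h2

lemma tower_aux (f g : Perm α) [Finite α] (A B : Set α) (hBA : B ⊆ A)
    (h : ∀ b ∈ A, induced f A b = induced g A b) :
    ∀ k, ∀ b ∈ A, 0 < k → (⇑f)^[k] b ∈ B → (∀ j, 0 < j → j < k → (⇑f)^[j] b ∉ B) →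
      ∃ l, 0 < l ∧ (⇑g)^[l] b = (⇑f)^[k] b ∧ ∀ j, 0 < j → j < l → (⇑g)^[j] b ∉ B := by
  intro k
  induction k using Nat.strong_induction_on with
  | _ k ih =>
    intro b hb hk hkB hmin
    obtain ⟨k1, hk1, hk1A, hk1min, he1⟩ := induced_spec f A b ⟨k, hk, hBA hkB⟩
    obtain ⟨l1, hl1, hl1A, hl1min, he2⟩ := induced_spec g A b (perm_return g A b hb)
    have he : (⇑g)^[l1] b = (⇑f)^[k1] b := by rw [← he1, ← he2, h b hb]
    have hle : k1 ≤ k := by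
      by_contra hlt
      exact hk1min k hk (by omega) (hBA hkB)
    rcases hle.eq_or_lt with heq | hlt
    · subst heq
      exact ⟨l1, hl1, he, fun j h1 h2 hB => hl1min j h1 h2 (hBA hB)⟩
    · have hnB : (⇑f)^[k1] b ∉ B := hmin k1 hk1 hlt
      have hadd : ∀ j, (⇑f)^[j] ((⇑f)^[k1] b) = (⇑f)^[j + k1] b := fun j =>
        (Function.iterate_add_apply _ _ _ _).symm
      obtain ⟨l, hl, hle, hlmin⟩ := ih (k - k1) (by omega) _ hk1A (by omega)
        (by rw [hadd, Nat.sub_add_cancel hle]; exact hkB)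
        (by intro j h1 h2; rw [hadd]; exact hmin _ (by omega) (by omega))
      refine ⟨l + l1, by omega, ?_, ?_⟩
      · rw [Function.iterate_add_apply, he, hle, hadd, Nat.sub_add_cancel (by omega)]
      · intro j h1 h2
        rcases lt_trichotomy j l1 with hj | hj | hj
        · exact fun hB => hl1min j h1 hj (hBA hB)
        · subst hj; rw [he]; exact hnB
        · have : j = (j - l1) + l1 := by omega
          rw [this, Function.iterate_add_apply, he]
          exact hlmin _ (by omega) (by omega)

lemma tower [Finite α] (f g : Perm α) (A B : Set α) (hBA : B ⊆ A)
    (h : ∀ b ∈ A, induced f A b = induced g A b) (b : α) (hb : b ∈ B) :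
    induced f B b = induced g B b := by
  obtain ⟨k, hk, hkB, hmin, he⟩ := induced_spec f B b (perm_return f B b hb)
  obtain ⟨l, hl, hle, hlmin⟩ := tower_aux f g A B hBA h k b (hBA hb) hk hkB hmin
  rw [he, ← hle]
  exact (induced_of g B b l hl (by rw [hle]; exact hkB) hlmin).symm

/-- Only the orbit of `u` matters. -/
lemma induced_inter [Finite α] (f : Perm α) (S T : Set α) (u : α) (hu : u ∈ S)
    (h : ∀ w, f.SameCycle u w → (w ∈ S ↔ w ∈ T)) : induced f T u = induced f S u := by
  obtain ⟨k, hk, hkB, hmin, he⟩ := induced_spec f S u (perm_return f S u hu)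
  rw [he]
  exact induced_of f T u k hk ((h _ (sc_iter f u k)).1 hkB)
    (fun j h1 h2 hT => hmin j h1 h2 ((h _ (sc_iter f u j)).2 hT))

lemma induced_conj (f g : Perm α) (S : Set α) (u : α) :
    induced (⇑(g * f * g⁻¹)) (g '' S) (g u) = g (induced f S u) := by
  have hit : ∀ k, (⇑(g * f * g⁻¹))^[k] (g u) = g ((⇑f)^[k] u) := by
    intro k
    induction k with
    | zero => rfl
    | succ k ih => rw [Function.iterate_succ_apply', ih, Function.iterate_succ_apply']; simp
  by_cases hex : ∃ k, 0 < k ∧ (⇑f)^[k] u ∈ S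
  · obtain ⟨k, hk, hkB, hmin, he⟩ := induced_spec f S u hex
    rw [he, ← hit]
    refine induced_of _ _ _ k hk ?_ ?_
    · rw [hit]; exact ⟨_, hkB, rfl⟩
    · intro j h1 h2
      rw [hit]
      rintro ⟨v, hv, hve⟩
      exact hmin j h1 h2 (by rw [← g.injective hve]; exact hv)
  · unfold induced
    rw [dif_neg hex, dif_neg]
    rintro ⟨k, hk, h⟩
    rw [hit] at h
    obtain ⟨v, hv, hve⟩ := h
    exact hex ⟨k, hk, by rw [← g.injective hve]; exact hv⟩

/-! Patterns -/

lemma swap_orbit [Finite α] (f : Perm α) (S : Set α) (a c : α) (ha : a ∈ S) (hc : c ∈ S)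
    (h1 : induced f S a = c) (h2 : induced f S c = a) :
    f.SameCycle a c ∧ ∀ w ∈ S, f.SameCycle a w → w = a ∨ w = c := by
  refine ⟨h1 ▸ (induced_mem f S a ha).2, fun w hw hsc => ?_⟩
  have := closed_reach f S {a, c} a w (by simp) (by rintro x (rfl | rfl) <;> assumption)
    (by rintro x (rfl | rfl) <;> simp [h1, h2]) hw hsc
  simpa using this

lemma cyc3_orbit [Finite α] (f : Perm α) (S : Set α) (a b c : α) (ha : a ∈ S) (hb : b ∈ S)
    (hc : c ∈ S) (h1 : induced f S a = b) (h2 : induced f S b = c) (h3 : induced f S c = a) :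
    f.SameCycle a b ∧ f.SameCycle b c ∧ ∀ w ∈ S, f.SameCycle a w → w = a ∨ w = b ∨ w = c := by
  refine ⟨h1 ▸ (induced_mem f S a ha).2, h2 ▸ (induced_mem f S b hb).2, fun w hw hsc => ?_⟩
  have := closed_reach f S {a, b, c} a w (by simp) (by rintro x (rfl | rfl | rfl) <;> assumption)
    (by rintro x (rfl | rfl | rfl) <;> simp [h1, h2, h3]) hw hsc
  simpa using this

lemma induced_ne_self [Finite α] (f : Perm α) (S : Set α) (a c : α) (ha : a ∈ S) (hc : c ∈ S)
    (hac : a ≠ c) (hsc : f.SameCycle a c) : induced f S a ≠ a := by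
  intro h
  have := closed_reach f S {a} a c (by simp) (by rintro x rfl; assumption)
    (by rintro x rfl; simpa using h) hc hsc
  exact hac (by simpa using this.symm)

lemma swap_of_orbit [Finite α] (f : Perm α) (S : Set α) (a c : α) (ha : a ∈ S) (hc : c ∈ S)
    (hac : a ≠ c) (hsc : f.SameCycle a c) (h : ∀ w ∈ S, f.SameCycle a w → w = a ∨ w = c) :
    induced f S a = c ∧ induced f S c = a := by
  have h1 := induced_mem f S a ha
  have h2 := induced_mem f S c hc
  have n1 := induced_ne_self f S a c ha hc hac hsc
  have n2 := induced_ne_self f S c a hc ha hac.symm hsc.symm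
  exact ⟨(h _ h1.1 h1.2).resolve_left n1, (h _ h2.1 (hsc.trans h2.2)).resolve_right n2⟩

lemma cyc3_of_orbit [Finite α] (f : Perm α) (S : Set α) (s t w : α) (hs : s ∈ S) (ht : t ∈ S)
    (hw : w ∈ S) (hst : s ≠ t) (hsw : s ≠ w) (htw : t ≠ w) (hft : f s = t) (hsc : f.SameCycle s w)
    (h : ∀ z ∈ S, f.SameCycle s z → z = s ∨ z = t ∨ z = w) :
    induced f S s = t ∧ induced f S t = w ∧ induced f S w = s := by
  have hsct : f.SameCycle s t := hft ▸ sc_apply f s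
  have e1 : induced f S s = t := by rw [induced_one f S s (by rw [hft]; exact ht), hft]
  have h2 := induced_mem f S t ht
  have h3 := induced_mem f S w hw
  have n2 := induced_ne_self f S t s ht hs hst.symm hsct.symm
  have n3 := induced_ne_self f S w s hw hs hsw.symm hsc.symm
  have e2 : induced f S t = w := by
    rcases h _ h2.1 (hsct.trans h2.2) with h' | h' | h'
    · have := closed_reach f S {s, t} s w (by simp) (by rintro x (rfl | rfl) <;> assumption)
        (by rintro x (rfl | rfl) <;> simp [e1, h']) hw hsc
      simp only [Set.mem_insert_iff, Set.mem_singleton_iff] at this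
      rcases this with h | h
      · exact absurd h.symm hsw
      · exact absurd h.symm htw
    · exact absurd h' n2
    · exact h'
  refine ⟨e1, e2, ?_⟩
  rcases h _ h3.1 (hsc.trans h3.2) with h' | h' | h'
  · exact h'
  · have := closed_reach f S {t, w} w s (by simp) (by rintro x (rfl | rfl) <;> assumption)
        (by rintro x (rfl | rfl) <;> simp [e2, h']) hs hsc.symm
    simp only [Set.mem_insert_iff, Set.mem_singleton_iff] at this
    rcases this with h | h
    · exact absurd h hst
    · exact absurd h hsw
  · exact absurd h' n3


structure HasPos (f : α → α) (D : Set α) (pos : α → ℕ) (n : ℕ) : Prop where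
  lt : ∀ u ∈ D, pos u < n
  inj : ∀ u ∈ D, ∀ v ∈ D, pos u = pos v → u = v
  maps : ∀ u ∈ D, f u ∈ D
  step : ∀ u ∈ D, pos (f u) = if pos u + 1 < n then pos u + 1 else 0

def dst (n a b : ℕ) : ℕ := if a < b then b - a else b + n - a

def cyc3 (a b c : ℕ) : Prop := (a < b ∧ b < c) ∨ (b < c ∧ c < a) ∨ (c < a ∧ a < b)

def cyc4 (a b c d : ℕ) : Prop := (a < b ∧ b < c ∧ c < d) ∨ (b < c ∧ c < d ∧ d < a) ∨
  (c < d ∧ d < a ∧ a < b) ∨ (d < a ∧ a < b ∧ b < c)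

variable {f : α → α} {D : Set α} {pos : α → ℕ} {n : ℕ}

lemma HasPos.iter (H : HasPos f D pos n) (u : α) (hu : u ∈ D) (k : ℕ) (hk : k ≤ n) :
    f^[k] u ∈ D ∧ pos (f^[k] u) = if pos u + k < n then pos u + k else pos u + k - n := by
  have h0 := H.lt u hu
  induction k with
  | zero => simpa [h0] using hu
  | succ k ih =>
    obtain ⟨h1, h2⟩ := ih (by omega)
    rw [Function.iterate_succ_apply']
    refine ⟨H.maps _ h1, ?_⟩
    rw [H.step _ h1, h2]
    split_ifs <;> omega

lemma HasPos.iter_dst (H : HasPos f D pos n) (u v : α) (hu : u ∈ D) (hv : v ∈ D) :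
    f^[dst n (pos u) (pos v)] u = v := by
  have h1 := H.lt u hu
  have h2 := H.lt v hv
  have hle : dst n (pos u) (pos v) ≤ n := by unfold dst; split_ifs <;> omega
  obtain ⟨h3, h4⟩ := H.iter u hu _ hle
  apply H.inj _ h3 _ hv
  rw [h4]
  unfold dst
  split_ifs <;> omega

lemma HasPos.induced_iff (H : HasPos f D pos n) (S : Set α) (u v : α) (hu : u ∈ D)
    (huS : u ∈ S) : induced f S u = v ↔
      v ∈ D ∧ v ∈ S ∧ ∀ w ∈ D, w ∈ S → dst n (pos u) (pos v) ≤ dst n (pos u) (pos w) := by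
  have h0 := H.lt u hu
  have key : ∀ v ∈ D, v ∈ S → (∀ w ∈ D, w ∈ S →
      dst n (pos u) (pos v) ≤ dst n (pos u) (pos w)) → induced f S u = v := by
    intro v hv hvS hmin
    have hlt := H.lt v hv
    have h1 := H.iter_dst u v hu hv
    rw [← h1]
    refine induced_of f S u _ ?_ (by rw [h1]; exact hvS) ?_
    · unfold dst; split_ifs <;> omega
    · intro j hj1 hj2 hjS
      have hjn : j ≤ n := by unfold dst at hj2; split_ifs at hj2 <;> omega
      obtain ⟨h3, h4⟩ := H.iter u hu j hjn
      have h5 := hmin _ h3 hjS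
      have h6 : dst n (pos u) (pos (f^[j] u)) = j := by
        have : dst n (pos u) (pos v) ≤ n := by unfold dst; split_ifs <;> omega
        rw [h4]; unfold dst; split_ifs <;> omega
      omega
  constructor
  · intro h
    classical
    obtain ⟨v', ⟨hv'D, hv'S⟩, hmin⟩ : ∃ v', (v' ∈ D ∧ v' ∈ S) ∧ ∀ w, (w ∈ D ∧ w ∈ S) →
        dst n (pos u) (pos v') ≤ dst n (pos u) (pos w) := by
      have hex : ∃ k, ∃ v', (v' ∈ D ∧ v' ∈ S) ∧ dst n (pos u) (pos v') = k := ⟨_, u, ⟨hu, huS⟩, rfl⟩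
      obtain ⟨v', hv', he⟩ := Nat.find_spec hex
      exact ⟨v', hv', fun w hw => by rw [he]; exact Nat.find_min' hex ⟨w, hw, rfl⟩⟩
    have := key v' hv'D hv'S (fun w h1 h2 => hmin w ⟨h1, h2⟩)
    rw [← h, this]
    exact ⟨hv'D, hv'S, fun w h1 h2 => hmin w ⟨h1, h2⟩⟩
  · rintro ⟨h1, h2, h3⟩
    exact key v h1 h2 h3

lemma HasPos.cyc3_iff (H : HasPos f D pos n) (a b c : α) (ha : a ∈ D) (hb : b ∈ D) (hc : c ∈ D)
    (hab : a ≠ b) (hac : a ≠ c) (hbc : b ≠ c) :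
    MapsCyc3 f {a, b, c} a b c ↔ cyc3 (pos a) (pos b) (pos c) := by
  have l1 := H.lt a ha
  have l2 := H.lt b hb
  have l3 := H.lt c hc
  have n1 : pos a ≠ pos b := fun h => hab (H.inj _ ha _ hb h)
  have n2 : pos a ≠ pos c := fun h => hac (H.inj _ ha _ hc h)
  have n3 : pos b ≠ pos c := fun h => hbc (H.inj _ hb _ hc h)
  unfold MapsCyc3
  rw [H.induced_iff _ a b ha (by simp), H.induced_iff _ b c hb (by simp),
    H.induced_iff _ c a hc (by simp)]
  constructor
  · rintro ⟨⟨-, -, h1⟩, ⟨-, -, h2⟩, -, -, h3⟩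
    have e1 := h1 c hc (by simp)
    have e2 := h2 a ha (by simp)
    have e3 := h3 b hb (by simp)
    unfold dst at e1 e2 e3
    unfold cyc3
    split_ifs at e1 e2 e3 <;> omega
  · intro h
    unfold cyc3 at h
    refine ⟨⟨hb, by simp, ?_⟩, ⟨hc, by simp, ?_⟩, ha, by simp, ?_⟩ <;>
    · rintro w - (rfl | rfl | rfl) <;> unfold dst <;> split_ifs <;> omega

lemma HasPos.cyc4_iff (H : HasPos f D pos n) (a b c d : α) (ha : a ∈ D) (hb : b ∈ D) (hc : c ∈ D)
    (hd : d ∈ D) (hp : List.Pairwise (· ≠ ·) [a, b, c, d]) :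
    MapsCyc4 f {a, b, c, d} a b c d ↔ cyc4 (pos a) (pos b) (pos c) (pos d) := by
  simp only [List.pairwise_cons, List.mem_cons, List.not_mem_nil, or_false, forall_eq_or_imp,
    forall_eq, IsEmpty.forall_iff, implies_true, List.Pairwise.nil, and_true, ne_eq] at hp
  obtain ⟨⟨hab, hac, had⟩, ⟨hbc, hbd⟩, hcd⟩ := hp
  have l1 := H.lt a ha
  have l2 := H.lt b hb
  have l3 := H.lt c hc
  have l4 := H.lt d hd
  have n1 : pos a ≠ pos b := fun h => hab (H.inj _ ha _ hb h)
  have n2 : pos a ≠ pos c := fun h => hac (H.inj _ ha _ hc h)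
  have n3 : pos b ≠ pos c := fun h => hbc (H.inj _ hb _ hc h)
  have n4 : pos a ≠ pos d := fun h => had (H.inj _ ha _ hd h)
  have n5 : pos b ≠ pos d := fun h => hbd (H.inj _ hb _ hd h)
  have n6 : pos c ≠ pos d := fun h => hcd (H.inj _ hc _ hd h)
  unfold MapsCyc4
  rw [H.induced_iff _ a b ha (by simp), H.induced_iff _ b c hb (by simp),
    H.induced_iff _ c d hc (by simp), H.induced_iff _ d a hd (by simp)]
  constructor
  · rintro ⟨⟨-, -, h1⟩, ⟨-, -, h2⟩, ⟨-, -, h3⟩, -, -, h4⟩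
    have e1 := h1 c hc (by simp)
    have e1' := h1 d hd (by simp)
    have e2 := h2 d hd (by simp)
    have e2' := h2 a ha (by simp)
    have e3 := h3 a ha (by simp)
    have e3' := h3 b hb (by simp)
    clear h1 h2 h3 h4
    unfold dst at e1 e2 e3 e1' e2' e3'
    unfold cyc4
    grind
  · intro h
    unfold cyc4 at h
    refine ⟨⟨hb, by simp, ?_⟩, ⟨hc, by simp, ?_⟩, ⟨hd, by simp, ?_⟩, ha, by simp, ?_⟩ <;>
    · rintro w - (rfl | rfl | rfl | rfl) <;> unfold dst <;> split_ifs <;> omega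

lemma hasPos_formPerm [DecidableEq α] (l : List α) (pos : α → ℕ)
    (h : ∀ i (hi : i < l.length), pos l[i] = i) :
    HasPos (⇑l.formPerm) {u | u ∈ l} pos l.length := by
  have hnd : l.Nodup := by
    rw [List.nodup_iff_injective_get]
    intro i j hij
    have h1 := h i i.2
    have h2 := h j j.2
    apply Fin.ext
    rw [← h1, ← h2]
    exact congrArg pos hij
  refine ⟨?_, ?_, ?_, ?_⟩
  · intro u hu
    obtain ⟨i, hi, rfl⟩ := List.getElem_of_mem hu
    rw [h]; exact hi
  · intro u hu v hv huv
    obtain ⟨i, hi, rfl⟩ := List.getElem_of_mem hu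
    obtain ⟨j, hj, rfl⟩ := List.getElem_of_mem hv
    rw [h, h] at huv
    subst huv; rfl
  · intro u hu
    exact List.formPerm_apply_mem_of_mem hu
  · intro u hu
    obtain ⟨i, hi, rfl⟩ := List.getElem_of_mem hu
    rw [List.formPerm_apply_getElem l hnd, h, h]
    split_ifs with hc
    · exact Nat.mod_eq_of_lt hc
    · have : i + 1 = l.length := by omega
      rw [this]; simp

end general

section specific
variable {p q : ℕ}

lemma pos_ext : HasPos (⇑(gammaExt p q)) (extSet p q) (fun u => (u : ℕ)) p := by
  have h := hasPos_formPerm ((List.finRange (p + q)).take p) (fun u : Fin (p + q) => (u : ℕ))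
    (by intro i hi; simp)
  have hl : ((List.finRange (p + q)).take p).length = p := by simp
  rw [hl] at h
  suffices hD : extSet p q = {u | u ∈ (List.finRange (p + q)).take p} by rw [hD]; exact h
  ext u
  simp only [extSet, Set.mem_ofPred_eq]
  constructor
  · intro hu
    rw [List.mem_iff_getElem]
    exact ⟨u, by simpa using hu, by simp⟩
  · intro hu
    exact h.lt u hu

lemma pos_int : HasPos (⇑(gammaInt p q)) (intSet p q) (fun u => (u : ℕ) - p) q := by
  have h := hasPos_formPerm ((List.finRange (p + q)).drop p) (fun u : Fin (p + q) => (u : ℕ) - p)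
    (by intro i hi; simp)
  have hl : ((List.finRange (p + q)).drop p).length = q := by simp
  rw [hl] at h
  suffices hD : intSet p q = {u | u ∈ (List.finRange (p + q)).drop p} by rw [hD]; exact h
  ext u
  simp only [intSet, Set.mem_ofPred_eq]
  constructor
  · intro hu
    rw [List.mem_iff_getElem]
    exact ⟨u - p, by simp; omega, by simp [Fin.ext_iff]; omega⟩
  · intro hu
    obtain ⟨i, hi, rfl⟩ := List.getElem_of_mem hu
    simp

lemma ext_fix (u : Fin (p + q)) (hu : u ∈ intSet p q) : gammaExt p q u = u := by
  apply List.formPerm_apply_of_notMem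
  intro h
  obtain ⟨i, hi, rfl⟩ := List.getElem_of_mem h
  simp [intSet] at hu hi
  omega

lemma int_fix (u : Fin (p + q)) (hu : u ∈ extSet p q) : gammaInt p q u = u := by
  apply List.formPerm_apply_of_notMem
  intro h
  obtain ⟨i, hi, rfl⟩ := List.getElem_of_mem h
  simp [extSet] at hu

lemma ext_or_int (u : Fin (p + q)) : u ∈ extSet p q ∨ u ∈ intSet p q := by
  simp only [extSet, intSet, Set.mem_ofPred_eq]; omega

lemma not_ext_iff (u : Fin (p + q)) : u ∉ extSet p q ↔ u ∈ intSet p q := by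
  simp only [extSet, intSet, Set.mem_ofPred_eq]; omega

lemma pos_ann_ext : HasPos (⇑(gammaAnn p q)) (extSet p q) (fun u => (u : ℕ)) p := by
  have H := @pos_ext p q
  have e : ∀ u ∈ extSet p q, gammaAnn p q u = gammaExt p q u := by
    intro u hu
    simp [gammaAnn, int_fix u hu]
  exact ⟨H.lt, H.inj, fun u hu => by rw [e u hu]; exact H.maps u hu,
    fun u hu => by rw [e u hu]; exact H.step u hu⟩

lemma pos_ann_int : HasPos (⇑(gammaAnn p q)) (intSet p q) (fun u => (u : ℕ) - p) q := by
  have H := @pos_int p q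
  have e : ∀ u ∈ intSet p q, gammaAnn p q u = gammaInt p q u := by
    intro u hu
    simp [gammaAnn, ext_fix _ (H.maps u hu)]
  exact ⟨H.lt, H.inj, fun u hu => by rw [e u hu]; exact H.maps u hu,
    fun u hu => by rw [e u hu]; exact H.step u hu⟩

lemma pos_rot (n : ℕ) : HasPos (⇑(finRotate n)) Set.univ (fun u => (u : ℕ)) n := by
  refine ⟨fun u _ => u.2, fun u _ v _ h => Fin.ext h, fun _ _ => trivial, fun u _ => ?_⟩
  cases n with
  | zero => exact u.elim0
  | succ n =>
    simp only [coe_finRotate, Fin.ext_iff, Fin.val_last]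
    have := u.2
    split_ifs <;> omega

def lamPos (p q x y u : ℕ) : ℕ :=
  if u < p then (if x < u then u - x - 1 else u + p - x - 1)
  else (if y < u then u - y - 1 + (p - 1) else u + q - y - 1 + (p - 1))

lemma pos_lam (x y : Fin (p + q)) (hx : x ∈ extSet p q) (hy : y ∈ intSet p q) :
    HasPos (⇑(lamPerm p q x y)) {u | u ≠ x ∧ u ≠ y} (fun u => lamPos p q x y u) (p + q - 2) := by
  have hxp : (x : ℕ) < p := hx
  have hyp : p ≤ (y : ℕ) := hy
  have hyq := y.2
  have hE : ∀ k, k < p - 1 → (((gammaExt p q ^ (k + 1)) x : Fin (p + q)) : ℕ) =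
      if (x : ℕ) + (k + 1) < p then (x : ℕ) + (k + 1) else (x : ℕ) + (k + 1) - p := by
    intro k hk
    have := (pos_ext (p := p) (q := q)).iter x hx (k + 1) (by omega)
    rw [Perm.iterate_eq_pow] at this
    exact this.2
  have hI : ∀ k, k < q - 1 → (((gammaInt p q ^ (k + 1)) y : Fin (p + q)) : ℕ) =
      if (y : ℕ) - p + (k + 1) < q then (y : ℕ) + (k + 1) else (y : ℕ) + (k + 1) - q := by
    intro k hk
    have := (pos_int (p := p) (q := q)).iter y hy (k + 1) (by omega)
    rw [Perm.iterate_eq_pow] at this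
    obtain ⟨h1, h2⟩ := this
    have h1' : p ≤ (((gammaInt p q ^ (k + 1)) y : Fin (p + q)) : ℕ) := h1
    split_ifs at h2 ⊢ <;> omega
  have h := hasPos_formPerm (((List.range (p - 1)).map fun k => (gammaExt p q ^ (k + 1)) x) ++
    ((List.range (q - 1)).map fun k => (gammaInt p q ^ (k + 1)) y))
    (fun u => lamPos p q x y u) (by
      intro i hi
      simp only [List.length_append, List.length_map, List.length_range] at hi
      rw [List.getElem_append]
      simp only [List.length_map, List.length_range, List.getElem_map, List.getElem_range]
      split_ifs with hc
      · rw [hE i hc]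
        unfold lamPos
        split_ifs <;> omega
      · rw [hI _ (by omega)]
        unfold lamPos
        split_ifs <;> omega)
  have hl : (((List.range (p - 1)).map fun k => (gammaExt p q ^ (k + 1)) x) ++
    ((List.range (q - 1)).map fun k => (gammaInt p q ^ (k + 1)) y)).length = p + q - 2 := by
    simp; omega
  rw [hl] at h
  suffices hD : {u : Fin (p + q) | u ≠ x ∧ u ≠ y} = {u : Fin (p + q) | u ∈
      (((List.range (p - 1)).map fun k => (gammaExt p q ^ (k + 1)) x) ++
    ((List.range (q - 1)).map fun k => (gammaInt p q ^ (k + 1)) y))} by rw [hD]; exact h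
  ext u
  simp only [Set.mem_ofPred_eq, List.mem_append, List.mem_map, List.mem_range]
  have hu2 := u.2
  constructor
  · rintro ⟨h1, h2⟩
    have h1' : (u : ℕ) ≠ x := fun h => h1 (Fin.ext h)
    have h2' : (u : ℕ) ≠ y := fun h => h2 (Fin.ext h)
    by_cases hu : (u : ℕ) < p
    · left
      by_cases hc : (x : ℕ) < u
      · refine ⟨u - x - 1, by omega, Fin.ext ?_⟩
        rw [hE _ (by omega)]
        split_ifs <;> omega
      · refine ⟨u + p - x - 1, by omega, Fin.ext ?_⟩
        rw [hE _ (by omega)]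
        split_ifs <;> omega
    · right
      by_cases hc : (y : ℕ) < u
      · refine ⟨u - y - 1, by omega, Fin.ext ?_⟩
        rw [hI _ (by omega)]
        split_ifs <;> omega
      · refine ⟨u + q - y - 1, by omega, Fin.ext ?_⟩
        rw [hI _ (by omega)]
        split_ifs <;> omega
  · rintro (⟨k, hk, rfl⟩ | ⟨k, hk, rfl⟩)
    · have := hE k hk
      constructor <;> intro he <;> rw [he] at this <;> split_ifs at this <;> omega
    · have := hI k hk
      constructor <;> intro he <;> rw [he] at this <;> split_ifs at this <;> omega

/-! Invariance under conjugation -/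

structure Good (p q : ℕ) (g : Perm (Fin (p + q))) : Prop where
  ce : g * gammaExt p q * g⁻¹ = gammaExt p q
  ci : g * gammaInt p q * g⁻¹ = gammaInt p q
  he : ∀ u, g u ∈ extSet p q ↔ u ∈ extSet p q

lemma Good.hi {g : Perm (Fin (p + q))} (hg : Good p q g) (u) :
    g u ∈ intSet p q ↔ u ∈ intSet p q := by
  rw [← not_ext_iff, ← not_ext_iff, hg.he]

lemma Good.inv {g : Perm (Fin (p + q))} (hg : Good p q g) : Good p q g⁻¹ := by
  refine ⟨?_, ?_, ?_⟩
  · conv_lhs => rw [← hg.ce]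
    group
  · conv_lhs => rw [← hg.ci]
    group
  · intro u
    rw [← hg.he]; simp

lemma Good.mul {g h : Perm (Fin (p + q))} (hg : Good p q g) (hh : Good p q h) :
    Good p q (g * h) := by
  refine ⟨?_, ?_, ?_⟩
  · rw [mul_inv_rev]
    calc g * h * gammaExt p q * (h⁻¹ * g⁻¹) = g * (h * gammaExt p q * h⁻¹) * g⁻¹ := by group
      _ = _ := by rw [hh.ce, hg.ce]
  · rw [mul_inv_rev]
    calc g * h * gammaInt p q * (h⁻¹ * g⁻¹) = g * (h * gammaInt p q * h⁻¹) * g⁻¹ := by group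
      _ = _ := by rw [hh.ci, hg.ci]
  · intro u
    rw [Perm.mul_apply, hg.he, hh.he]

lemma Good.one : Good p q 1 := ⟨by simp, by simp, by simp⟩

lemma Good.pow {g : Perm (Fin (p + q))} (hg : Good p q g) (k : ℕ) : Good p q (g ^ k) := by
  induction k with
  | zero => simpa using Good.one
  | succ k ih => rw [pow_succ]; exact ih.mul hg

lemma ext_int_comm : gammaExt p q * gammaInt p q = gammaInt p q * gammaExt p q := by
  ext u
  congr 1
  simp only [Perm.mul_apply]
  rcases ext_or_int u with h | h
  · rw [int_fix u h, int_fix _ (pos_ext.maps u h)]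
  · rw [ext_fix u h, ext_fix _ (pos_int.maps u h)]

lemma good_ext : Good p q (gammaExt p q) := by
  refine ⟨by group, by rw [ext_int_comm]; group, fun u => ?_⟩
  rcases ext_or_int u with h | h
  · simp only [h, iff_true]; exact pos_ext.maps u h
  · rw [ext_fix u h]

lemma good_int : Good p q (gammaInt p q) := by
  refine ⟨by rw [← ext_int_comm]; group, by group, fun u => ?_⟩
  rcases ext_or_int u with h | h
  · rw [int_fix u h]
  · have := pos_int.maps u h
    rw [← not_ext_iff] at this h
    tauto

lemma pow_conj (g h : Perm (Fin (p + q))) (hc : g * h * g⁻¹ = h) (k : ℕ) (x : Fin (p + q)) :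
    g ((h ^ k) x) = (h ^ k) (g x) := by
  have : g * h ^ k = h ^ k * g := by
    have hc' : Commute g h := by
      show g * h = h * g
      nth_rewrite 2 [← hc]; group
    exact (hc'.pow_right k).eq
  exact congrArg (fun e : Perm _ => e x) this

lemma formPerm_map_conj {α : Type*} [DecidableEq α] (g : Perm α) (l : List α) :
    (l.map g).formPerm = g * l.formPerm * g⁻¹ := by
  induction l with
  | nil => simp
  | cons x l ih =>
    cases l with
    | nil => simp
    | cons y l =>
      simp only [List.map_cons, List.formPerm_cons_cons] at ih ⊢
      rw [ih, Equiv.swap_apply_apply]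
      group

lemma Good.lam {g : Perm (Fin (p + q))} (hg : Good p q g) (x y : Fin (p + q)) :
    lamPerm p q (g x) (g y) = g * lamPerm p q x y * g⁻¹ := by
  unfold lamPerm
  rw [← formPerm_map_conj]
  congr 1
  simp only [List.map_append, List.map_map]
  congr 1
  · apply List.map_congr_left
    intro k _
    simp only [Function.comp]
    exact (pow_conj g _ hg.ce _ _).symm
  · apply List.map_congr_left
    intro k _
    simp only [Function.comp]
    exact (pow_conj g _ hg.ci _ _).symm

lemma Good.ann {g : Perm (Fin (p + q))} (hg : Good p q g) :
    g * gammaAnn p q * g⁻¹ = gammaAnn p q := by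
  unfold gammaAnn
  calc g * (gammaExt p q * gammaInt p q) * g⁻¹
      = (g * gammaExt p q * g⁻¹) * (g * gammaInt p q * g⁻¹) := by group
    _ = _ := by rw [hg.ce, hg.ci]

lemma conj_eq {α : Type*} {f g : Perm α} {S S' : Set α} {u v : α} (hS : S' = g '' S)
    (h : induced f S u = v) : induced (⇑(g * f * g⁻¹)) S' (g u) = g v := by
  rw [hS, induced_conj, h]

lemma pairwise_map {α : Type*} (g : Perm α) (l : List α) (h : List.Pairwise (· ≠ ·) l) :
    List.Pairwise (· ≠ ·) (l.map g) := by
  rw [List.pairwise_map]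
  exact h.imp (fun hab he => hab (g.injective he))

lemma AC1_conj {g τ : Perm (Fin (p + q))} (hg : Good p q g) (h : AC1 p q τ) :
    AC1 p q (g * τ * g⁻¹) := by
  obtain ⟨a, b, c, d, h1, ⟨h2, h3, h4, h5⟩, h6, h7, h8, h9⟩ := h
  have hS : ({g a, g b, g c, g d} : Set (Fin (p + q))) = g '' {a, b, c, d} := by
    simp only [Set.image_insert_eq, Set.image_singleton]
  refine ⟨g a, g b, g c, g d, pairwise_map g _ h1, ?_, ?_⟩
  · rw [← hg.ann]
    exact ⟨conj_eq hS h2, conj_eq hS h3, conj_eq hS h4, conj_eq hS h5⟩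
  · exact ⟨conj_eq hS h6, conj_eq hS h7, conj_eq hS h8, conj_eq hS h9⟩

lemma AC2_conj {g τ : Perm (Fin (p + q))} (hg : Good p q g) (h : AC2 p q τ) :
    AC2 p q (g * τ * g⁻¹) := by
  obtain ⟨a, b, c, x, y, h1, hx, hy, ⟨h2, h3, h4⟩, ⟨h6, h7, h8⟩, h9, h10⟩ := h
  have hS : ({g a, g b, g c} : Set (Fin (p + q))) = g '' {a, b, c} := by
    simp only [Set.image_insert_eq, Set.image_singleton]
  have hS' : ({g a, g b, g c, g x, g y} : Set (Fin (p + q))) = g '' {a, b, c, x, y} := by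
    simp only [Set.image_insert_eq, Set.image_singleton]
  refine ⟨g a, g b, g c, g x, g y, pairwise_map g _ h1, (hg.he _).2 hx, (hg.hi _).2 hy, ?_, ?_, ?_⟩
  · rw [hg.lam]
    exact ⟨conj_eq hS h2, conj_eq hS h3, conj_eq hS h4⟩
  · exact ⟨conj_eq hS' h6, conj_eq hS' h7, conj_eq hS' h8⟩
  · exact ⟨conj_eq hS' h9, conj_eq hS' h10⟩

lemma AC3_conj {g τ : Perm (Fin (p + q))} (hg : Good p q g) (h : AC3 p q τ) :
    AC3 p q (g * τ * g⁻¹) := by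
  obtain ⟨a, b, c, d, x, y, h1, hx, hy, ⟨h2, h3, h4, h5⟩, ⟨h6, h7, h8, h8'⟩, h9, h10⟩ := h
  have hS : ({g a, g b, g c, g d} : Set (Fin (p + q))) = g '' {a, b, c, d} := by
    simp only [Set.image_insert_eq, Set.image_singleton]
  have hS' : ({g a, g b, g c, g d, g x, g y} : Set (Fin (p + q))) = g '' {a, b, c, d, x, y} := by
    simp only [Set.image_insert_eq, Set.image_singleton]
  refine ⟨g a, g b, g c, g d, g x, g y, pairwise_map g _ h1, (hg.he _).2 hx, (hg.hi _).2 hy,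
    ?_, ?_, ?_⟩
  · rw [hg.lam]
    exact ⟨conj_eq hS h2, conj_eq hS h3, conj_eq hS h4, conj_eq hS h5⟩
  · exact ⟨conj_eq hS' h6, conj_eq hS' h7, conj_eq hS' h8, conj_eq hS' h8'⟩
  · exact ⟨conj_eq hS' h9, conj_eq hS' h10⟩

lemma orbit_conj {g τ : Perm (Fin (p + q))} {A : Set (Fin (p + q))}
    (h : IsOrbit (g * τ * g⁻¹) A) : ∃ A0, IsOrbit τ A0 ∧ A = g '' A0 := by
  obtain ⟨a, rfl⟩ := h
  refine ⟨{b | τ.SameCycle (g⁻¹ a) b}, ⟨_, rfl⟩, ?_⟩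
  ext b
  simp only [Set.mem_ofPred_eq, Perm.sameCycle_conj, Set.mem_image]
  constructor
  · intro h; exact ⟨g⁻¹ b, h, by simp⟩
  · rintro ⟨c, hc, rfl⟩; simpa using hc

lemma std_conj {g τ : Perm (Fin (p + q))} (hg : Good p q g) (h : AnnStandard p q τ) :
    AnnStandard p q (g * τ * g⁻¹) := by
  obtain ⟨h1, h2⟩ := h
  have iE : ∀ A0 : Set (Fin (p + q)), (g '' A0) ∩ extSet p q = g '' (A0 ∩ extSet p q) := by
    intro A0
    ext b
    constructor
    · rintro ⟨⟨c, hc, rfl⟩, hb⟩; exact ⟨c, ⟨hc, (hg.he c).1 hb⟩, rfl⟩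
    · rintro ⟨c, ⟨hc, hb⟩, rfl⟩; exact ⟨⟨c, hc, rfl⟩, (hg.he c).2 hb⟩
  have iI : ∀ A0 : Set (Fin (p + q)), (g '' A0) ∩ intSet p q = g '' (A0 ∩ intSet p q) := by
    intro A0
    ext b
    constructor
    · rintro ⟨⟨c, hc, rfl⟩, hb⟩; exact ⟨c, ⟨hc, (hg.hi c).1 hb⟩, rfl⟩
    · rintro ⟨c, ⟨hc, hb⟩, rfl⟩; exact ⟨⟨c, hc, rfl⟩, (hg.hi c).2 hb⟩
  constructor
  · intro A hA
    obtain ⟨A0, hA0, rfl⟩ := orbit_conj hA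
    obtain ⟨h3, h4⟩ := h1 A0 hA0
    constructor
    · rw [iE]
      rintro _ ⟨b, hb, rfl⟩
      rw [induced_conj, h3 b hb, ← induced_conj (gammaExt p q), hg.ce]
    · rw [iI]
      rintro _ ⟨b, hb, rfl⟩
      rw [induced_conj, h4 b hb, ← induced_conj (gammaInt p q), hg.ci]
  · intro A hA hE hI
    obtain ⟨A0, hA0, rfl⟩ := orbit_conj hA
    rw [iE] at hE ⊢
    rw [iI] at hI ⊢
    obtain ⟨⟨a, ⟨ha1, ha2⟩, hau⟩, b, ⟨hb1, hb2⟩, hbu⟩ := h2 A0 hA0 (by simpa using hE) (by simpa using hI)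
    constructor
    · refine ⟨g a, ⟨⟨a, ha1, rfl⟩, ?_⟩, ?_⟩
      · simpa [hg.hi] using ha2
      · rintro _ ⟨⟨c, hc, rfl⟩, hc2⟩
        rw [hau c ⟨hc, by simpa [hg.hi] using hc2⟩]
    · refine ⟨g b, ⟨⟨b, hb1, rfl⟩, ?_⟩, ?_⟩
      · simpa [hg.he] using hb2
      · rintro _ ⟨⟨c, hc, rfl⟩, hc2⟩
        rw [hbu c ⟨hc, by simpa [hg.he] using hc2⟩]

lemma annNC_conj {g τ : Perm (Fin (p + q))} (hg : Good p q g) (h : AnnNC p q τ) :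
    AnnNC p q (g * τ * g⁻¹) := by
  obtain ⟨h1, h2, h3, h4⟩ := h
  have e : g⁻¹ * (g * τ * g⁻¹) * g⁻¹⁻¹ = τ := by group
  refine ⟨std_conj hg h1, fun h => h2 ?_, fun h => h3 ?_, fun h => h4 ?_⟩
  · have := AC1_conj hg.inv h; rwa [e] at this
  · have := AC2_conj hg.inv h; rwa [e] at this
  · have := AC3_conj hg.inv h; rwa [e] at this

/-! Disc non-crossing implies annular non-crossing -/

lemma mem_ext_iff (u : Fin (p + q)) : u ∈ extSet p q ↔ (u : ℕ) < p := Iff.rfl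

lemma mem_int_iff (u : Fin (p + q)) : u ∈ intSet p q ↔ p ≤ (u : ℕ) := Iff.rfl

lemma disc_next {n : ℕ} {τ : Perm (Fin n)} (h : DiscStandardRel (finRotate n) τ)
    (u w : Fin n) (hw : τ.SameCycle u w) : dst n u (τ u) ≤ dst n u w := by
  have h1 := h {b | τ.SameCycle u b} ⟨u, rfl⟩ u (Perm.SameCycle.refl τ u)
  rw [induced_one _ _ _ (sc_apply τ u)] at h1
  have h2 := ((pos_rot n).induced_iff _ u (τ u) trivial (Perm.SameCycle.refl τ u)).1 h1.symm
  exact h2.2.2 w trivial hw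

lemma disc_tower {n : ℕ} {τ : Perm (Fin n)} (h : DiscStandardRel (finRotate n) τ)
    (S : Set (Fin n)) (u : Fin n) (hu : u ∈ S) (hS : ∀ w ∈ S, τ.SameCycle u w) :
    induced τ S u = induced (finRotate n) S u :=
  tower τ (finRotate n) {b | τ.SameCycle u b} S hS
    (fun b hb => h {b | τ.SameCycle u b} ⟨u, rfl⟩ b hb) u hu

lemma disc_std {τ : Perm (Fin (p + q))} (h : DiscStandardRel (finRotate (p + q)) τ) :
    AnnStandard p q τ := by
  constructor
  · rintro A ⟨a, rfl⟩
    constructor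
    · rintro b ⟨hb, hbe⟩
      rw [disc_tower h ({b | τ.SameCycle a b} ∩ extSet p q) b ⟨hb, hbe⟩
        (fun w hw => hb.symm.trans hw.1)]
      symm
      rw [pos_ext.induced_iff ({b | τ.SameCycle a b} ∩ extSet p q) b _ hbe ⟨hb, hbe⟩]
      obtain ⟨-, h2, h3⟩ := ((pos_rot (p + q)).induced_iff
        ({b | τ.SameCycle a b} ∩ extSet p q) b _ trivial ⟨hb, hbe⟩).1 rfl
      refine ⟨h2.2, h2, fun w hw1 hw2 => ?_⟩
      have h4 := h3 w trivial hw2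
      have h5 := h2.2
      generalize induced (⇑(finRotate (p + q))) ({b | τ.SameCycle a b} ∩ extSet p q) b = v at *
      rw [mem_ext_iff] at hbe hw1 h5
      unfold dst at *
      split_ifs at * <;> omega
    · rintro b ⟨hb, hbe⟩
      rw [disc_tower h ({b | τ.SameCycle a b} ∩ intSet p q) b ⟨hb, hbe⟩
        (fun w hw => hb.symm.trans hw.1)]
      symm
      rw [pos_int.induced_iff ({b | τ.SameCycle a b} ∩ intSet p q) b _ hbe ⟨hb, hbe⟩]
      obtain ⟨-, h2, h3⟩ := ((pos_rot (p + q)).induced_iff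
        ({b | τ.SameCycle a b} ∩ intSet p q) b _ trivial ⟨hb, hbe⟩).1 rfl
      refine ⟨h2.2, h2, fun w hw1 hw2 => ?_⟩
      have h4 := h3 w trivial hw2
      have h5 := h2.2
      generalize induced (⇑(finRotate (p + q))) ({b | τ.SameCycle a b} ∩ intSet p q) b = v at *
      rw [mem_int_iff] at hbe hw1 h5
      have := w.2
      have := v.2
      unfold dst at *
      split_ifs at * <;> omega
  · rintro A ⟨a, rfl⟩ ⟨e, he⟩ ⟨i, hi⟩
    obtain ⟨m, hm, hmax⟩ := Set.exists_max_image ({b | τ.SameCycle a b} ∩ extSet p q)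
      (fun u => (u : ℕ)) (Set.toFinite _) ⟨e, he⟩
    obtain ⟨m', hm', hmax'⟩ := Set.exists_max_image ({b | τ.SameCycle a b} ∩ intSet p q)
      (fun u => (u : ℕ)) (Set.toFinite _) ⟨i, hi⟩
    have hs : ∀ u, τ.SameCycle a u → τ.SameCycle a (τ u) := fun u hu => hu.trans (sc_apply τ u)
    constructor
    · refine ⟨m, ⟨hm, ?_⟩, ?_⟩
      · have h1 := disc_next h m i (hm.1.symm.trans hi.1)
        have h2 : τ m ∈ extSet p q → (τ m : ℕ) ≤ m := fun hh => hmax _ ⟨hs _ hm.1, hh⟩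
        have h3 := hm.2
        have h4 := hi.2
        rw [mem_ext_iff] at *
        rw [mem_int_iff] at *
        have := (τ m).2
        unfold dst at *
        split_ifs at * <;> omega
      · rintro m1 ⟨hm1, hm1'⟩
        have h1 := disc_next h m1 m (hm1.1.symm.trans hm.1)
        have h2 := hmax _ hm1
        have h3 := hm.2
        apply Fin.ext
        rw [mem_ext_iff] at *
        rw [mem_int_iff] at *
        unfold dst at *
        split_ifs at * <;> omega
    · refine ⟨m', ⟨hm', ?_⟩, ?_⟩
      · have h1 := disc_next h m' e (hm'.1.symm.trans he.1)
        have h2 : τ m' ∈ intSet p q → (τ m' : ℕ) ≤ m' := fun hh => hmax' _ ⟨hs _ hm'.1, hh⟩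
        have h3 := hm'.2
        have h4 := he.2
        rw [mem_ext_iff] at *
        rw [mem_int_iff] at *
        have := (τ m').2
        unfold dst at *
        split_ifs at * <;> omega
      · rintro m1 ⟨hm1, hm1'⟩
        have h1 := disc_next h m1 m' (hm1.1.symm.trans hm'.1)
        have h2 := hmax' _ hm1
        have h3 := hm'.2
        apply Fin.ext
        have h5 := hm1.2
        rw [mem_ext_iff] at *
        rw [mem_int_iff] at *
        have := m'.2
        unfold dst at *
        split_ifs at * <;> omega

lemma nocross_cyc {n : ℕ} {τ : Perm (Fin n)} (h : OrbitsNoCrossing τ) (a b c d : Fin n)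
    (hac : τ.SameCycle a c) (hbd : τ.SameCycle b d) (hab : ¬ τ.SameCycle a b) :
    ¬ cyc4 a b c d := by
  have nba : ¬ τ.SameCycle b a := fun h => hab h.symm
  rintro (h1 | h1 | h1 | h1)
  · exact h ⟨a, b, c, d, h1.1, h1.2.1, h1.2.2, hac, hbd, hab⟩
  · exact h ⟨b, c, d, a, h1.1, h1.2.1, h1.2.2, hbd, hac.symm, fun h => nba (h.trans hac.symm)⟩
  · exact h ⟨c, d, a, b, h1.1, h1.2.1, h1.2.2, hac.symm, hbd.symm,
      fun h => hab (hac.trans (h.trans hbd.symm))⟩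
  · exact h ⟨d, a, b, c, h1.1, h1.2.1, h1.2.2, hbd.symm, hac, fun h => nba (hbd.trans h)⟩

lemma cyc4_shift {a b c d k : ℕ} (ha : k ≤ a) (hb : k ≤ b) (hc : k ≤ c) (hd : k ≤ d) :
    cyc4 (a - k) (b - k) (c - k) (d - k) ↔ cyc4 a b c d := by
  unfold cyc4; omega

lemma side_of {x y a c : ℕ} (hxy : x < y) (hax : a ≠ x) (hay : a ≠ y) (hcx : c ≠ x)
    (hcy : c ≠ y) (h1 : ¬ cyc4 x a y c) (h2 : ¬ cyc4 x c y a) :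
    (x < a ∧ a < y) ∧ (x < c ∧ c < y) ∨ (a < x ∨ y < a) ∧ (c < x ∨ y < c) := by
  rcases lt_or_gt_of_ne hax with a1 | a1
  · rcases lt_or_gt_of_ne hcx with c1 | c1
    · omega
    · rcases lt_or_gt_of_ne hcy with c2 | c2
      · exact absurd (Or.inr (Or.inr (Or.inr ⟨a1, c1, c2⟩))) h2
      · omega
  · rcases lt_or_gt_of_ne hay with a2 | a2
    · rcases lt_or_gt_of_ne hcx with c1 | c1
      · exact absurd (Or.inr (Or.inr (Or.inr ⟨c1, a1, a2⟩))) h1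
      · rcases lt_or_gt_of_ne hcy with c2 | c2
        · omega
        · exact absurd (Or.inl ⟨a1, a2, c2⟩) h1
    · rcases lt_or_gt_of_ne hcx with c1 | c1
      · omega
      · rcases lt_or_gt_of_ne hcy with c2 | c2
        · exact absurd (Or.inl ⟨c1, c2, a2⟩) h2
        · omega

lemma lam_I {p q x y a b : ℕ} (hx : x < p) (hy : p ≤ y) (hyq : y < p + q)
    (ha : x < a ∧ a < y) (hb : x < b ∧ b < y) :
    lamPos p q x y a < lamPos p q x y b ↔
      (a < b ∧ (b < p ∨ p ≤ a)) ∨ (a < p ∧ p ≤ b) := by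
  unfold lamPos; split_ifs <;> omega

lemma lam_J {p q x y a b : ℕ} (hx : x < p) (hy : p ≤ y) (hbq : b < p + q)
    (ha : a < x ∨ y < a) (hb : b < x ∨ y < b) :
    lamPos p q x y a < lamPos p q x y b ↔ a < b := by
  unfold lamPos; split_ifs <;> omega

lemma lam_cyc3 {p q x y a b c : ℕ} (hx : x < p) (hy : p ≤ y) (hyq : y < p + q)
    (ha : a < p + q) (hb : b < p + q) (hc : c < p + q)
    (hs : ((x < a ∧ a < y) ∧ (x < b ∧ b < y) ∧ (x < c ∧ c < y)) ∨
      ((a < x ∨ y < a) ∧ (b < x ∨ y < b) ∧ (c < x ∨ y < c)))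
    (h : cyc3 (lamPos p q x y a) (lamPos p q x y b) (lamPos p q x y c)) : cyc3 a b c := by
  unfold cyc3 at h
  rcases hs with ⟨sa, sb, sc⟩ | ⟨sa, sb, sc⟩
  · rw [lam_I hx hy hyq sa sb, lam_I hx hy hyq sb sc, lam_I hx hy hyq sc sa] at h
    unfold cyc3; omega
  · rw [lam_J hx hy hb sa sb, lam_J hx hy hc sb sc, lam_J hx hy ha sc sa] at h
    exact h

lemma cyc4_of_cyc3 {a b c d : ℕ} (h1 : cyc3 a b c) (h2 : cyc3 a c d) : cyc4 a b c d := by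
  unfold cyc3 at *; unfold cyc4; omega

lemma cyc3_of_cyc4 {a b c d : ℕ} (h : cyc4 a b c d) : cyc3 a b c ∧ cyc3 a c d := by
  unfold cyc4 at h; unfold cyc3; omega

lemma lam_IJ {p q x y a b c d : ℕ} (hx : x < p) (hy : p ≤ y) (hyq : y < p + q)
    (hb : b < p + q) (hd : d < p + q)
    (sa : x < a ∧ a < y) (sc : x < c ∧ c < y) (sb : b < x ∨ y < b) (sd : d < x ∨ y < d) :
    ¬ cyc4 (lamPos p q x y a) (lamPos p q x y b) (lamPos p q x y c) (lamPos p q x y d) ∧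
    ¬ cyc4 (lamPos p q x y b) (lamPos p q x y a) (lamPos p q x y d) (lamPos p q x y c) := by
  have key : ∀ u v, (x < u ∧ u < y) → (v < x ∨ y < v) → v < p + q → 
      (u < p ∧ lamPos p q x y u < lamPos p q x y v ∨
       p ≤ u ∧ lamPos p q x y v < lamPos p q x y u) := by
    intro u v hu hv hvq
    unfold lamPos; split_ifs <;> omega
  have k1 := key a b sa sb hb
  have k2 := key a d sa sd hd
  have k3 := key c b sc sb hb
  have k4 := key c d sc sd hd
  unfold cyc4
  omega

lemma disc_ac1 {τ : Perm (Fin (p + q))} (h : DiscNC τ) : ¬ AC1 p q τ := by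
  rintro ⟨a, b, c, d, h1, h2, h3, h4, h5, h6⟩
  have hb := h2.1
  have hc := h2.2.1
  have hd := h2.2.2.1
  have o1 := swap_orbit τ _ a c (by simp) (by simp) h3 h4
  have o2 := swap_orbit τ _ b d (by simp) (by simp) h5 h6
  have hab : ¬ τ.SameCycle a b := by
    intro hsc
    have := o1.2 b (by simp) hsc
    simp at h1
    rcases this with h | h
    · exact h1.1.1 h.symm
    · exact h1.2.1.1 h
  refine nocross_cyc h.2 a b c d o1.1 o2.1 hab ?_
  rcases ext_or_int a with ha | ha
  · have hb' := ((pos_ann_ext.induced_iff _ a b ha (by simp)).1 hb).1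
    have hc' := ((pos_ann_ext.induced_iff _ b c hb' (by simp)).1 hc).1
    have hd' := ((pos_ann_ext.induced_iff _ c d hc' (by simp)).1 hd).1
    exact (pos_ann_ext.cyc4_iff a b c d ha hb' hc' hd' h1).1 h2
  · have hb' := ((pos_ann_int.induced_iff _ a b ha (by simp)).1 hb).1
    have hc' := ((pos_ann_int.induced_iff _ b c hb' (by simp)).1 hc).1
    have hd' := ((pos_ann_int.induced_iff _ c d hc' (by simp)).1 hd).1
    exact (cyc4_shift ha hb' hc' hd').1 ((pos_ann_int.cyc4_iff a b c d ha hb' hc' hd' h1).1 h2)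

lemma disc_ac2 {τ : Perm (Fin (p + q))} (h : DiscNC τ) : ¬ AC2 p q τ := by
  rintro ⟨a, b, c, x, y, h1, hx, hy, h2, ⟨h3, h4, h5⟩, h6, h7⟩
  have o1 := cyc3_orbit τ _ a c b (by simp) (by simp) (by simp) h3 h4 h5
  have o2 := swap_orbit τ _ x y (by simp) (by simp) h6 h7
  simp only [List.pairwise_cons, List.mem_cons, List.not_mem_nil, or_false, forall_eq_or_imp,
    forall_eq, IsEmpty.forall_iff, implies_true, List.Pairwise.nil, and_true, ne_eq] at h1
  obtain ⟨⟨hab, hac, hax, hay⟩, ⟨hbc, hbx, hby⟩, ⟨hcx, hcy⟩, hxy⟩ := h1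
  have hxa : ¬ τ.SameCycle x a := by
    intro hsc
    rcases o2.2 a (by simp) hsc with h | h
    · exact hax h
    · exact hay h
  have sab := o1.1.trans o1.2.1
  have hS : ∀ u, τ.SameCycle a u → ∀ w, τ.SameCycle u w →
      (w ∈ ({a, b, c, x, y} : Set (Fin (p + q))) ↔ w ∈ ({a, c, b} : Set (Fin (p + q)))) := by
    intro u hu w hw
    have haw := hu.trans hw
    simp only [Set.mem_insert_iff, Set.mem_singleton_iff]
    constructor
    · rintro (h | h | h | h | h)
      · simp [h]
      · simp [h]
      · simp [h]
      · subst h; exact absurd haw.symm hxa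
      · subst h; exact absurd (o2.1.trans haw.symm) hxa
    · rintro (h | h | h) <;> simp [h]
  have hin : ∀ u ∈ ({a, c, b} : Set (Fin (p + q))), τ.SameCycle a u := by
    rintro u (rfl | rfl | rfl)
    · exact Perm.SameCycle.refl _ _
    · exact o1.1
    · exact sab
  have hM : MapsCyc3 (finRotate (p + q)) {a, c, b} a c b := by
    refine ⟨?_, ?_, ?_⟩
    · rw [← disc_tower h.1 _ _ (by simp) (fun w hw => (hin _ (by simp)).symm.trans (hin w hw)),
        induced_inter τ {a, b, c, x, y} _ _ (by simp) (hS _ (hin _ (by simp)))]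
      exact h3
    · rw [← disc_tower h.1 _ _ (by simp) (fun w hw => (hin _ (by simp)).symm.trans (hin w hw)),
        induced_inter τ {a, b, c, x, y} _ _ (by simp) (hS _ (hin _ (by simp)))]
      exact h4
    · rw [← disc_tower h.1 _ _ (by simp) (fun w hw => (hin _ (by simp)).symm.trans (hin w hw)),
        induced_inter τ {a, b, c, x, y} _ _ (by simp) (hS _ (hin _ (by simp)))]
      exact h5
  rw [(pos_rot (p + q)).cyc3_iff a c b trivial trivial trivial hac hab (Ne.symm hbc)] at hM
  rw [(pos_lam x y hx hy).cyc3_iff a b c ⟨hax, hay⟩ ⟨hbx, hby⟩ ⟨hcx, hcy⟩ hab hac hbc] at h2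
  have c1 := nocross_cyc h.2 x a y b o2.1 sab hxa
  have c2 := nocross_cyc h.2 x b y a o2.1 sab.symm (fun h => hxa (h.trans sab.symm))
  have c3 := nocross_cyc h.2 x a y c o2.1 o1.1 hxa
  have c4 := nocross_cyc h.2 x c y a o2.1 o1.1.symm (fun h => hxa (h.trans o1.1.symm))
  rw [mem_ext_iff] at hx
  rw [mem_int_iff] at hy
  rw [Fin.ext_iff] at *
  have := a.2
  have := b.2
  have := c.2
  have := y.2
  generalize (a : ℕ) = a at *
  generalize (b : ℕ) = b at *
  generalize (c : ℕ) = c at *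
  generalize (x : ℕ) = x at *
  generalize (y : ℕ) = y at *
  have s1 := side_of (by omega) hax hay hbx hby c1 c2
  have s2 := side_of (by omega) hax hay hcx hcy c3 c4
  have := lam_cyc3 (a := a) (b := b) (c := c) hx hy ‹_› ‹_› ‹_› ‹_› (by omega) h2
  unfold cyc3 at hM this
  omega

lemma disc_ac3 {τ : Perm (Fin (p + q))} (h : DiscNC τ) : ¬ AC3 p q τ := by
  rintro ⟨a, b, c, d, x, y, h1, hx, hy, h2, ⟨h3, h4, h5, h5'⟩, h6, h7⟩
  have o1 := swap_orbit τ _ a c (by simp) (by simp) h3 h4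
  have o3 := swap_orbit τ _ b d (by simp) (by simp) h5 h5'
  have o2 := swap_orbit τ _ x y (by simp) (by simp) h6 h7
  have h1' : List.Pairwise (· ≠ ·) [a, b, c, d] := by
    refine List.Pairwise.sublist ?_ h1
    exact List.sublist_append_left [a, b, c, d] [x, y]
  simp only [List.pairwise_cons, List.mem_cons, List.not_mem_nil, or_false, forall_eq_or_imp,
    forall_eq, IsEmpty.forall_iff, implies_true, List.Pairwise.nil, and_true, ne_eq] at h1
  obtain ⟨⟨hab, hac, had, hax, hay⟩, ⟨hbc, hbd, hbx, hby⟩, ⟨hcd, hcx, hcy⟩, ⟨hdx, hdy⟩, hxy⟩ := h1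
  have hxa : ¬ τ.SameCycle x a := by
    intro hsc
    rcases o2.2 a (by simp) hsc with h | h
    · exact hax h
    · exact hay h
  have hxb : ¬ τ.SameCycle x b := by
    intro hsc
    rcases o2.2 b (by simp) hsc with h | h
    · exact hbx h
    · exact hby h
  have nab : ¬ τ.SameCycle a b := by
    intro hsc
    rcases o1.2 b (by simp) hsc with h | h
    · exact hab h.symm
    · exact hbc h
  rw [(pos_lam x y hx hy).cyc4_iff a b c d ⟨hax, hay⟩ ⟨hbx, hby⟩ ⟨hcx, hcy⟩ ⟨hdx, hdy⟩ h1'] at h2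
  have c1 := nocross_cyc h.2 x a y c o2.1 o1.1 hxa
  have c2 := nocross_cyc h.2 x c y a o2.1 o1.1.symm (fun h => hxa (h.trans o1.1.symm))
  have c3 := nocross_cyc h.2 x b y d o2.1 o3.1 hxb
  have c4 := nocross_cyc h.2 x d y b o2.1 o3.1.symm (fun h => hxb (h.trans o3.1.symm))
  have c5 := nocross_cyc h.2 a b c d o1.1 o3.1 nab
  have c6 := nocross_cyc h.2 a d c b o1.1 o3.1.symm (fun h => nab (h.trans o3.1.symm))
  rw [mem_ext_iff] at hx
  rw [mem_int_iff] at hy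
  rw [Fin.ext_iff] at *
  have := a.2
  have := b.2
  have := c.2
  have := d.2
  have := y.2
  generalize (a : ℕ) = a at *
  generalize (b : ℕ) = b at *
  generalize (c : ℕ) = c at *
  generalize (d : ℕ) = d at *
  generalize (x : ℕ) = x at *
  generalize (y : ℕ) = y at *
  have s1 := side_of (by omega) hax hay hcx hcy c1 c2
  have s2 := side_of (by omega) hbx hby hdx hdy c3 c4
  have h2' := cyc3_of_cyc4 h2
  rcases s1 with ⟨sa, sc⟩ | ⟨sa, sc⟩ <;> rcases s2 with ⟨sb, sd⟩ | ⟨sb, sd⟩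
  · exact c5 (cyc4_of_cyc3 (lam_cyc3 hx hy ‹_› ‹_› ‹_› ‹_› (Or.inl ⟨sa, sb, sc⟩) h2'.1)
      (lam_cyc3 hx hy ‹_› ‹_› ‹_› ‹_› (Or.inl ⟨sa, sc, sd⟩) h2'.2))
  · exact (lam_IJ hx hy ‹_› ‹_› ‹_› sa sc sb sd).1 h2
  · exact (lam_IJ hx hy ‹_› ‹_› ‹_› sb sd sa sc).2 h2
  · exact c5 (cyc4_of_cyc3 (lam_cyc3 hx hy ‹_› ‹_› ‹_› ‹_› (Or.inr ⟨sa, sb, sc⟩) h2'.1)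
      (lam_cyc3 hx hy ‹_› ‹_› ‹_› ‹_› (Or.inr ⟨sa, sc, sd⟩) h2'.2))

lemma disc_annNC {τ : Perm (Fin (p + q))} (h : DiscNC τ) : AnnNC p q τ :=
  ⟨disc_std h.1, disc_ac1 h, disc_ac2 h, disc_ac3 h⟩

/-! Annular non-crossing permutations are conjugate to disc non-crossing ones -/

lemma swap2_make {τ : Perm (Fin (p + q))} {a b c d : Fin (p + q)} (S : Set (Fin (p + q)))
    (ha : a ∈ S) (hb : b ∈ S) (hc : c ∈ S) (hd : d ∈ S)
    (hac : a ≠ c) (hbd : b ≠ d) (sac : τ.SameCycle a c) (sbd : τ.SameCycle b d)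
    (h1 : ∀ w ∈ S, τ.SameCycle a w → w = a ∨ w = c)
    (h2 : ∀ w ∈ S, τ.SameCycle b w → w = b ∨ w = d) : MapsSwap2 τ S a b c d := by
  have e1 := swap_of_orbit τ S a c ha hc hac sac h1
  have e2 := swap_of_orbit τ S b d hb hd hbd sbd h2
  exact ⟨e1.1, e1.2, e2.1, e2.2⟩

lemma AC1_make {τ : Perm (Fin (p + q))} {a b c d : Fin (p + q)}
    (hD : (d : ℕ) < p ∨ p ≤ (a : ℕ)) (hab : a < b) (hbc : b < c) (hcd : c < d)
    (sac : τ.SameCycle a c) (sbd : τ.SameCycle b d) (nab : ¬ τ.SameCycle a b) : AC1 p q τ := by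
  have hP : List.Pairwise (· ≠ ·) [a, b, c, d] := by
    simp only [List.pairwise_cons, List.mem_cons, List.not_mem_nil, or_false, forall_eq_or_imp,
      forall_eq, IsEmpty.forall_iff, implies_true, List.Pairwise.nil, and_true, ne_eq]
    exact ⟨⟨hab.ne, (hab.trans hbc).ne, (hab.trans (hbc.trans hcd)).ne⟩,
      ⟨hbc.ne, (hbc.trans hcd).ne⟩, hcd.ne⟩
  have nba : ¬ τ.SameCycle b a := fun h => nab h.symm
  refine ⟨a, b, c, d, hP, ?_, ?_⟩
  · rcases hD with hD | hD
    · have hc : c ∈ extSet p q := by rw [mem_ext_iff]; omega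
      have hb : b ∈ extSet p q := by rw [mem_ext_iff]; omega
      have ha : a ∈ extSet p q := by rw [mem_ext_iff]; omega
      rw [pos_ann_ext.cyc4_iff a b c d ha hb hc hD hP]
      exact Or.inl ⟨hab, hbc, hcd⟩
    · have hd : d ∈ intSet p q := by rw [mem_int_iff]; omega
      have hc : c ∈ intSet p q := by rw [mem_int_iff]; omega
      have hb : b ∈ intSet p q := by rw [mem_int_iff]; omega
      rw [pos_ann_int.cyc4_iff a b c d hD hb hc hd hP, cyc4_shift hD hb hc hd]
      exact Or.inl ⟨hab, hbc, hcd⟩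
  · apply swap2_make _ (by simp) (by simp) (by simp) (by simp) (hab.trans hbc).ne
      (hbc.trans hcd).ne sac sbd
    · rintro w (rfl | rfl | rfl | rfl) hw
      · simp
      · exact absurd hw nab
      · simp
      · exact absurd (hw.trans sbd.symm) nab
    · rintro w (rfl | rfl | rfl | rfl) hw
      · exact absurd hw nba
      · simp
      · exact absurd (hw.trans sac.symm) nba
      · simp

lemma AC2_make {τ : Perm (Fin (p + q))} {s t w x y : Fin (p + q)} (hx : x ∈ extSet p q)
    (hy : y ∈ intSet p q) (hst : s ≠ t) (hsw : s ≠ w) (htw : t ≠ w) (hft : τ s = t)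
    (hsc : τ.SameCycle s w) (sxy : τ.SameCycle x y) (nxs : ¬ τ.SameCycle x s)
    (hl : cyc3 (lamPos p q x y s) (lamPos p q x y w) (lamPos p q x y t)) : AC2 p q τ := by
  have sst : τ.SameCycle s t := hft ▸ sc_apply τ s
  have hxy : x ≠ y := by
    rintro rfl
    rw [mem_ext_iff] at hx
    rw [mem_int_iff] at hy
    omega
  have key : ∀ u, τ.SameCycle s u → u ≠ x ∧ u ≠ y := by
    intro u hu
    constructor
    · rintro rfl; exact nxs hu.symm
    · rintro rfl; exact nxs (sxy.trans hu.symm)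
  have ks := key s (Perm.SameCycle.refl _ _)
  have kt := key t sst
  have kw := key w hsc
  refine ⟨s, w, t, x, y, ?_, hx, hy, ?_, ?_, ?_⟩
  · simp only [List.pairwise_cons, List.mem_cons, List.not_mem_nil, or_false, forall_eq_or_imp,
      forall_eq, IsEmpty.forall_iff, implies_true, List.Pairwise.nil, and_true, ne_eq]
    exact ⟨⟨hsw, hst, ks⟩, ⟨htw.symm, kw⟩, kt, hxy⟩
  · rw [(pos_lam x y hx hy).cyc3_iff s w t ks kw kt hsw hst htw.symm]
    exact hl
  · apply cyc3_of_orbit τ _ s t w (by simp) (by simp) (by simp) hst hsw htw hft hsc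
    rintro z (rfl | rfl | rfl | rfl | rfl) hz
    · simp
    · simp
    · simp
    · exact absurd rfl (key _ hz).1
    · exact absurd rfl (key _ hz).2
  · apply swap_of_orbit τ _ x y (by simp) (by simp) hxy sxy
    rintro z (rfl | rfl | rfl | rfl | rfl) hz
    · exact absurd hz nxs
    · exact absurd (hz.trans hsc.symm) nxs
    · exact absurd (hz.trans sst.symm) nxs
    · simp
    · simp

lemma AC3_make {τ : Perm (Fin (p + q))} {a b c d x y : Fin (p + q)} (hx : (x : ℕ) + 1 = p)
    (hy : (y : ℕ) = p) (hab : a < b) (hbc : b < c) (hcd : c < d)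
    (sac : τ.SameCycle a c) (sbd : τ.SameCycle b d) (nab : ¬ τ.SameCycle a b)
    (sxy : τ.SameCycle x y) (nxa : ¬ τ.SameCycle x a) (nxb : ¬ τ.SameCycle x b) : AC3 p q τ := by
  have hxe : x ∈ extSet p q := by rw [mem_ext_iff]; omega
  have hye : y ∈ intSet p q := by rw [mem_int_iff]; omega
  have hxy : x ≠ y := by rintro rfl; omega
  have nba : ¬ τ.SameCycle b a := fun h => nab h.symm
  have key : ∀ u v, ¬ τ.SameCycle x u → τ.SameCycle u v → v ≠ x ∧ v ≠ y := by
    intro u v hu huv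
    constructor
    · rintro rfl; exact hu huv.symm
    · rintro rfl; exact hu (sxy.trans huv.symm)
  have ka := key a a nxa (Perm.SameCycle.refl _ _)
  have kc := key a c nxa sac
  have kb := key b b nxb (Perm.SameCycle.refl _ _)
  have kd := key b d nxb sbd
  have hP : List.Pairwise (· ≠ ·) [a, b, c, d] := by
    simp only [List.pairwise_cons, List.mem_cons, List.not_mem_nil, or_false, forall_eq_or_imp,
      forall_eq, IsEmpty.forall_iff, implies_true, List.Pairwise.nil, and_true, ne_eq]
    exact ⟨⟨hab.ne, (hab.trans hbc).ne, (hab.trans (hbc.trans hcd)).ne⟩,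
      ⟨hbc.ne, (hbc.trans hcd).ne⟩, hcd.ne⟩
  refine ⟨a, b, c, d, x, y, ?_, hxe, hye, ?_, ?_, ?_⟩
  · simp only [List.pairwise_cons, List.mem_cons, List.not_mem_nil, or_false, forall_eq_or_imp,
      forall_eq, IsEmpty.forall_iff, implies_true, List.Pairwise.nil, and_true, ne_eq] at hP ⊢
    exact ⟨⟨hP.1.1, hP.1.2.1, hP.1.2.2, ka⟩, ⟨hP.2.1.1, hP.2.1.2, kb⟩, ⟨hP.2.2, kc⟩, kd, hxy⟩
  · rw [(pos_lam x y hxe hye).cyc4_iff a b c d ka kb kc kd hP]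
    have mono : ∀ u v : Fin (p + q), u < v → (u ≠ x ∧ u ≠ y) → (v ≠ x ∧ v ≠ y) →
        lamPos p q x y u < lamPos p q x y v := by
      intro u v huv hu hv
      simp only [ne_eq, Fin.ext_iff] at hu hv
      have := v.2
      unfold lamPos
      split_ifs <;> omega
    exact Or.inl ⟨mono _ _ hab ka kb, mono _ _ hbc kb kc, mono _ _ hcd kc kd⟩
  · apply swap2_make _ (by simp) (by simp) (by simp) (by simp) (hab.trans hbc).ne
      (hbc.trans hcd).ne sac sbd
    · rintro w (rfl | rfl | rfl | rfl | rfl | rfl) hw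
      · simp
      · exact absurd hw nab
      · simp
      · exact absurd (hw.trans sbd.symm) nab
      · exact absurd rfl (key _ _ nxa hw).1
      · exact absurd rfl (key _ _ nxa hw).2
    · rintro w (rfl | rfl | rfl | rfl | rfl | rfl) hw
      · exact absurd hw nba
      · simp
      · exact absurd (hw.trans sac.symm) nba
      · simp
      · exact absurd rfl (key _ _ nxb hw).1
      · exact absurd rfl (key _ _ nxb hw).2
  · apply swap_of_orbit τ _ x y (by simp) (by simp) hxy sxy
    rintro z (rfl | rfl | rfl | rfl | rfl | rfl) hz
    · exact absurd hz nxa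
    · exact absurd hz nxb
    · exact absurd (hz.trans sac.symm) nxa
    · exact absurd (hz.trans sbd.symm) nxb
    · simp
    · simp

lemma reentry {τ : Perm (Fin (p + q))} (E : Set (Fin (p + q))) (b : Fin (p + q)) (hb : b ∈ E)
    (h : τ b ∉ E) : ∃ z, z ∉ E ∧ τ.SameCycle b z ∧
      τ z = induced τ ({w | τ.SameCycle b w} ∩ E) b := by
  obtain ⟨k, hk, hkS, hmin, he⟩ := induced_spec τ ({w | τ.SameCycle b w} ∩ E) b
    (perm_return _ _ _ ⟨Perm.SameCycle.refl _ _, hb⟩)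
  have hk1 : k ≠ 1 := by
    rintro rfl
    exact h hkS.2
  refine ⟨(⇑τ)^[k - 1] b, fun hE => ?_, sc_iter _ _ _, ?_⟩
  · exact hmin (k - 1) (by omega) (by omega) ⟨sc_iter _ _ _, hE⟩
  · rw [he, ← Function.iterate_succ_apply' (⇑τ), Nat.succ_eq_add_one, Nat.sub_add_cancel hk]

lemma ext_next {τ : Perm (Fin (p + q))} (h : AnnStandard p q τ) (b : Fin (p + q))
    (hb : b ∈ extSet p q) : ∃ v ∈ extSet p q, τ.SameCycle b v ∧
      (∀ w ∈ extSet p q, τ.SameCycle b w → dst p b v ≤ dst p b w) ∧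
      (τ b ∈ extSet p q → v = τ b) ∧
      (τ b ∈ intSet p q → ∃ z ∈ intSet p q, τ.SameCycle b z ∧ τ z = v) := by
  have h1 := (h.1 {w | τ.SameCycle b w} ⟨b, rfl⟩).1 b ⟨Perm.SameCycle.refl _ _, hb⟩
  have h2 := (pos_ext.induced_iff ({w | τ.SameCycle b w} ∩ extSet p q) b _ hb
    ⟨Perm.SameCycle.refl _ _, hb⟩).1 h1.symm
  refine ⟨_, h2.1, h2.2.1.1, fun w hw hsc => h2.2.2 w hw ⟨hsc, hw⟩, ?_, ?_⟩
  · intro hh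
    exact induced_one _ _ _ ⟨sc_apply _ _, hh⟩
  · intro hh
    obtain ⟨z, hz1, hz2, hz3⟩ := reentry (extSet p q) b hb ((not_ext_iff _).2 hh)
    exact ⟨z, (not_ext_iff _).1 hz1, hz2, hz3⟩

lemma int_next {τ : Perm (Fin (p + q))} (h : AnnStandard p q τ) (b : Fin (p + q))
    (hb : b ∈ intSet p q) : ∃ v ∈ intSet p q, τ.SameCycle b v ∧
      (∀ w ∈ intSet p q, τ.SameCycle b w → dst q (b - p) (v - p) ≤ dst q (b - p) (w - p)) ∧
      (τ b ∈ intSet p q → v = τ b) ∧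
      (τ b ∈ extSet p q → ∃ z ∈ extSet p q, τ.SameCycle b z ∧ τ z = v) := by
  have h1 := (h.1 {w | τ.SameCycle b w} ⟨b, rfl⟩).2 b ⟨Perm.SameCycle.refl _ _, hb⟩
  have h2 := (pos_int.induced_iff ({w | τ.SameCycle b w} ∩ intSet p q) b _ hb
    ⟨Perm.SameCycle.refl _ _, hb⟩).1 h1.symm
  have hn : ∀ u : Fin (p + q), u ∉ intSet p q ↔ u ∈ extSet p q := by
    intro u; rw [← not_ext_iff]; tauto
  refine ⟨_, h2.1, h2.2.1.1, fun w hw hsc => h2.2.2 w hw ⟨hsc, hw⟩, ?_, ?_⟩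
  · intro hh
    exact induced_one _ _ _ ⟨sc_apply _ _, hh⟩
  · intro hh
    obtain ⟨z, hz1, hz2, hz3⟩ := reentry (intSet p q) b hb ((hn _).2 hh)
    exact ⟨z, (hn _).1 hz1, hz2, hz3⟩

set_option maxHeartbeats 4000000 in
lemma disc_std_of {τ : Perm (Fin (p + q))} (h : AnnStandard p q τ)
    (C1 : ∀ b ∈ intSet p q, τ b ∈ extSet p q → ∀ w ∈ extSet p q, τ.SameCycle b w → τ b ≤ w)
    (C2 : ∀ b ∈ extSet p q, τ b ∈ intSet p q → ∀ w ∈ intSet p q, τ.SameCycle b w → τ b ≤ w) :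
    DiscStandardRel (finRotate (p + q)) τ := by
  rintro A ⟨a, rfl⟩ b hb
  have hb : τ.SameCycle a b := hb
  rw [induced_one τ _ b (hb.trans (sc_apply τ b))]
  symm
  rw [(pos_rot (p + q)).induced_iff {b | τ.SameCycle a b} b _ trivial hb]
  refine ⟨trivial, hb.trans (sc_apply τ b), fun w _ hw => ?_⟩
  have hw : τ.SameCycle b w := hb.symm.trans hw
  have hwlt := w.2
  have hblt := b.2
  have htlt := (τ b).2
  rcases ext_or_int b with hbe | hbe
  · obtain ⟨v, hv, hbv, hvmin, hv1, hv2⟩ := ext_next h b hbe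
    rcases ext_or_int (τ b) with ht | ht
    · have hv' := hv1 ht
      subst hv'
      rcases ext_or_int w with hwe | hwe
      · have h1 := hvmin w hwe hw
        rw [mem_ext_iff] at *
        clear C1 C2 hvmin hv1 hv2 h
        unfold dst at *
        split_ifs at * <;> omega
      · obtain ⟨⟨e, ⟨he1, he2⟩, -⟩, -⟩ := h.2 {w | τ.SameCycle b w} ⟨b, rfl⟩
          ⟨b, Perm.SameCycle.refl _ _, hbe⟩ ⟨w, hw, hwe⟩
        have hsbe : τ.SameCycle b e := he1.1
        have hee := he1.2
        obtain ⟨v', hv', hbv', hvmin', -, hv2'⟩ := ext_next h e hee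
        obtain ⟨z, hz, hez, hzv⟩ := hv2' he2
        have hz' := C1 z hz (by rw [hzv]; exact hv') e hee hez.symm
        rw [hzv] at hz'
        have g1 := hvmin' b hbe hsbe.symm
        have g2 := hvmin e hee hsbe
        have hne : (e : ℕ) ≠ b := by
          intro hh
          have : e = b := Fin.ext hh
          subst this
          rw [mem_ext_iff] at ht
          rw [mem_int_iff] at he2
          omega
        rw [Fin.le_def] at hz'
        rw [mem_ext_iff] at *
        rw [mem_int_iff] at *
        clear hvmin' hv2'
        clear C1 C2 hvmin hv1 hv2 h
        unfold dst at *
        split_ifs at * <;> omega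
    · obtain ⟨z, hz, hez, hzv⟩ := hv2 ht
      rcases ext_or_int w with hwe | hwe
      · have hz' := C1 z hz (by rw [hzv]; exact hv) b hbe hez.symm
        rw [hzv] at hz'
        have h1 := hvmin w hwe hw
        rw [Fin.le_def] at hz'
        rw [mem_ext_iff] at *
        rw [mem_int_iff] at *
        clear C1 C2 hvmin hv1 hv2 h
        unfold dst at *
        split_ifs at * <;> omega
      · have hz' := C2 b hbe ht w hwe hw
        rw [Fin.le_def] at hz'
        rw [mem_ext_iff] at *
        rw [mem_int_iff] at *
        clear C1 C2 hvmin hv1 hv2 h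
        unfold dst at *
        split_ifs at * <;> omega
  · obtain ⟨v, hv, hbv, hvmin, hv1, hv2⟩ := int_next h b hbe
    rcases ext_or_int (τ b) with ht | ht
    · obtain ⟨z, hz, hez, hzv⟩ := hv2 ht
      rcases ext_or_int w with hwe | hwe
      · have hz' := C1 b hbe ht w hwe hw
        rw [Fin.le_def] at hz'
        rw [mem_ext_iff] at *
        rw [mem_int_iff] at *
        clear C1 C2 hvmin hv1 hv2 h
        unfold dst at *
        split_ifs at * <;> omega
      · have hz' := C2 z hz (by rw [hzv]; exact hv) b hbe hez.symm
        rw [hzv] at hz'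
        have h1 := hvmin w hwe hw
        rw [Fin.le_def] at hz'
        rw [mem_ext_iff] at *
        rw [mem_int_iff] at *
        clear C1 C2 hvmin hv1 hv2 h
        unfold dst at *
        split_ifs at * <;> omega
    · have hv' := hv1 ht
      subst hv'
      rcases ext_or_int w with hwe | hwe
      · obtain ⟨-, e, ⟨he1, he2⟩, -⟩ := h.2 {w | τ.SameCycle b w} ⟨b, rfl⟩
          ⟨w, hw, hwe⟩ ⟨b, Perm.SameCycle.refl _ _, hbe⟩
        have hsbe : τ.SameCycle b e := he1.1
        have hee := he1.2
        obtain ⟨v', hv', hbv', hvmin', -, hv2'⟩ := int_next h e hee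
        obtain ⟨z, hz, hez, hzv⟩ := hv2' he2
        have hz' := C2 z hz (by rw [hzv]; exact hv') e hee hez.symm
        rw [hzv] at hz'
        have g1 := hvmin' b hbe hsbe.symm
        have g2 := hvmin e hee hsbe
        have hne : (e : ℕ) ≠ b := by
          intro hh
          have : e = b := Fin.ext hh
          subst this
          rw [mem_int_iff] at ht
          rw [mem_ext_iff] at he2
          omega
        have := e.2
        rw [Fin.le_def] at hz'
        rw [mem_ext_iff] at *
        rw [mem_int_iff] at *
        clear hvmin' hv2'
        clear C1 C2 hvmin hv1 hv2 h
        unfold dst at *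
        split_ifs at * <;> omega
      · have h1 := hvmin w hwe hw
        rw [mem_int_iff] at *
        clear C1 C2 hvmin hv1 hv2 h
        unfold dst at *
        split_ifs at * <;> omega

lemma disc_of_disconnected {τ : Perm (Fin (p + q))} (h : AnnNC p q τ)
    (hd : ∀ e ∈ extSet p q, τ e ∉ intSet p q) : DiscNC τ := by
  have hno : ∀ u v, u ∈ extSet p q → v ∈ intSet p q → ¬ τ.SameCycle u v := by
    intro u v hu hv hsc
    obtain ⟨⟨e, ⟨he1, he2⟩, -⟩, -⟩ := h.1.2 {w | τ.SameCycle u w} ⟨u, rfl⟩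
      ⟨u, Perm.SameCycle.refl _ _, hu⟩ ⟨v, hsc, hv⟩
    exact hd e he1.2 he2
  constructor
  · apply disc_std_of h.1
    · intro b hb ht
      exact absurd (sc_apply τ b).symm (hno _ _ ht hb)
    · intro b hb ht
      exact absurd ht (hd b hb)
  · rintro ⟨a, b, c, d, hab, hbc, hcd, sac, sbd, nab⟩
    apply h.2.1
    refine AC1_make ?_ hab hbc hcd sac sbd nab
    by_contra hcon
    have hde : d ∈ intSet p q := by rw [mem_int_iff]; omega
    have hae : a ∈ extSet p q := by rw [mem_ext_iff]; omega
    rcases ext_or_int c with hc | hc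
    · have hb : b ∈ extSet p q := by rw [mem_ext_iff] at *; omega
      exact hno b d hb hde sbd
    · exact hno a c hae hc sac

lemma disc_of_normal {τ : Perm (Fin (p + q))} (h : AnnNC p q τ) (x y : Fin (p + q))
    (hx : (x : ℕ) + 1 = p) (hy : (y : ℕ) = p) (hxy : τ x = y) : DiscNC τ := by
  have hxe : x ∈ extSet p q := by rw [mem_ext_iff]; omega
  have hye : y ∈ intSet p q := by rw [mem_int_iff]; omega
  have sxy : τ.SameCycle x y := hxy ▸ sc_apply τ x
  have hu := h.1.2 {w | τ.SameCycle x w} ⟨x, rfl⟩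
      ⟨x, Perm.SameCycle.refl _ _, hxe⟩ ⟨y, sxy, hye⟩
  have xne : ∀ u, ¬ τ.SameCycle x u → (u : ℕ) + 1 ≠ p ∧ (u : ℕ) ≠ p := by
    intro u hu
    constructor
    · intro hh
      have : u = x := Fin.ext (by omega)
      exact hu (this ▸ Perm.SameCycle.refl _ _)
    · intro hh
      have : u = y := Fin.ext (by omega)
      exact hu (this ▸ sxy)
  constructor
  · apply disc_std_of h.1
    · intro b hb ht w hw hbw
      by_contra hlt
      rw [not_le, Fin.lt_def] at hlt
      by_cases hxb : τ.SameCycle x b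
      · obtain ⟨v, hv, hbv, hvmin, -, hv2⟩ := ext_next h.1 x hxe
        obtain ⟨z, hz, hez, hzv⟩ := hv2 (hxy ▸ hye)
        have hzb : z = b := hu.2.unique ⟨⟨hez, hz⟩, by rw [hzv]; exact hv⟩ ⟨⟨hxb, hb⟩, ht⟩
        have h1 := hvmin w hw (hxb.trans hbw)
        rw [← hzv, hzb] at h1
        rw [mem_ext_iff] at hw ht
        unfold dst at h1
        split_ifs at h1 <;> omega
      · apply h.2.2.1
        have n1 := xne b hxb
        have n2 := xne w (fun h => hxb (h.trans hbw.symm))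
        have n3 := xne (τ b) (fun h => hxb (h.trans (sc_apply τ b).symm))
        have := b.2
        rw [mem_ext_iff] at hw ht
        rw [mem_int_iff] at hb
        refine AC2_make (s := b) (t := τ b) (w := w) hxe hye ?_ ?_ ?_ rfl hbw sxy hxb ?_
        · intro hh; rw [← hh] at ht; omega
        · rintro rfl; omega
        · intro hh; rw [hh] at hlt; omega
        · unfold cyc3 lamPos
          split_ifs <;> omega
    · intro b hb ht w hw hbw
      by_contra hlt
      rw [not_le, Fin.lt_def] at hlt
      by_cases hxb : τ.SameCycle x b
      · have hbx : b = x := hu.1.unique ⟨⟨hxb, hb⟩, ht⟩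
          ⟨⟨Perm.SameCycle.refl _ _, hxe⟩, by rw [hxy]; exact hye⟩
        rw [hbx, hxy] at hlt
        rw [mem_int_iff] at hw
        omega
      · apply h.2.2.1
        have n1 := xne b hxb
        have n2 := xne w (fun h => hxb (h.trans hbw.symm))
        have n3 := xne (τ b) (fun h => hxb (h.trans (sc_apply τ b).symm))
        have := (τ b).2
        rw [mem_int_iff] at hw ht
        rw [mem_ext_iff] at hb
        refine AC2_make (s := b) (t := τ b) (w := w) hxe hye ?_ ?_ ?_ rfl hbw sxy hxb ?_
        · intro hh; rw [← hh] at ht; omega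
        · rintro rfl; omega
        · intro hh; rw [hh] at hlt; omega
        · unfold cyc3 lamPos
          split_ifs <;> omega
  · have key : ∀ u z v z' : Fin (p + q), u < z → z < v → (z' < u ∨ v < z') → τ.SameCycle u v →
        τ.SameCycle x z → τ.SameCycle x z' → ¬ τ.SameCycle x u → False := by
      intro u z v z' huz hzv hz' suv sxz sxz' nxu
      have n1 := xne u nxu
      have n2 := xne v (fun h => nxu (h.trans suv.symm))
      have := u.2
      have := v.2
      have := z.2
      have := z'.2
      by_cases hv : (v : ℕ) < p
      · apply h.2.1
        refine AC1_make (a := u) (b := z) (c := v) (d := x) (Or.inl (by omega)) huz hzv ?_ suv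
          sxz.symm (fun h => nxu (sxz.trans h.symm))
        rw [Fin.lt_def]; omega
      · by_cases hu' : (u : ℕ) < p
        · apply h.2.2.1
          rw [Fin.lt_def, Fin.lt_def] at hz'
          refine AC2_make (s := x) (t := y) (w := z') (x := u) (y := v) hu' ?_ ?_ ?_ ?_ hxy sxz' suv
            (fun h => nxu h.symm) ?_
          · rw [mem_int_iff]; omega
          · rintro rfl; omega
          · rintro rfl; omega
          · rintro rfl; omega
          · unfold cyc3 lamPos
            split_ifs <;> omega
        · apply h.2.1
          refine AC1_make (a := y) (b := u) (c := z) (d := v) (Or.inr (by omega)) ?_ huz hzv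
            (sxy.symm.trans sxz) suv (fun h => nxu (sxy.trans h))
          rw [Fin.lt_def]; omega
    rintro ⟨a, b, c, d, hab, hbc, hcd, sac, sbd, nab⟩
    by_cases hxa : τ.SameCycle x a
    · exact key b c d a hbc hcd (Or.inl hab) sbd (hxa.trans sac) hxa
        (fun h => nab (hxa.symm.trans h))
    · by_cases hxb : τ.SameCycle x b
      · exact key a b c d hab hbc (Or.inr hcd) sac hxb (hxb.trans sbd) hxa
      · exact h.2.2.2 (AC3_make hx hy hab hbc hcd sac sbd nab sxy hxa hxb)

lemma conj_pow_mem (S : Set (Perm (Fin (p + q)))) (g : Perm (Fin (p + q)))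
    (hS : ∀ τ ∈ S, g * τ * g⁻¹ ∈ S) (k : ℕ) (τ : Perm (Fin (p + q))) (hτ : τ ∈ S) :
    g ^ k * τ * (g ^ k)⁻¹ ∈ S := by
  induction k with
  | zero => simpa using hτ
  | succ k ih =>
    have := hS _ ih
    rw [pow_succ', mul_inv_rev]
    simpa only [mul_assoc] using this

lemma mem_of_annNC {τ : Perm (Fin (p + q))} (h : AnnNC p q τ) (S : Set (Perm (Fin (p + q))))
    (hD : {τ : Perm (Fin (p + q)) | DiscNC τ} ⊆ S)
    (hE : ∀ τ ∈ S, gammaExt p q * τ * (gammaExt p q)⁻¹ ∈ S)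
    (hI : ∀ τ ∈ S, gammaInt p q * τ * (gammaInt p q)⁻¹ ∈ S) (hp : 0 < p) (hq : 0 < q) : τ ∈ S := by
  by_cases hd : ∀ e ∈ extSet p q, τ e ∉ intSet p q
  · exact hD (disc_of_disconnected h hd)
  · push Not at hd
    obtain ⟨e, he, hv⟩ := hd
    set x : Fin (p + q) := ⟨p - 1, by omega⟩ with hxdef
    set y : Fin (p + q) := ⟨p, by omega⟩ with hydef
    have hx : x ∈ extSet p q := by rw [mem_ext_iff]; simp [hxdef]; omega
    have hy : y ∈ intSet p q := by rw [mem_int_iff]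
    obtain ⟨i, hi⟩ : ∃ i : ℕ, (gammaExt p q ^ i) x = e := by
      have := pos_ext.iter_dst x e hx he
      rw [Perm.iterate_eq_pow] at this
      exact ⟨_, this⟩
    obtain ⟨j, hj⟩ : ∃ j : ℕ, (gammaInt p q ^ j) y = τ e := by
      have := pos_int.iter_dst y (τ e) hy hv
      rw [Perm.iterate_eq_pow] at this
      exact ⟨_, this⟩
    have gE : Good p q (gammaExt p q ^ i) := good_ext.pow i
    have gI : Good p q (gammaInt p q ^ j) := good_int.pow j
    have fE : ∀ (k : ℕ), ∀ u ∈ intSet p q, (gammaExt p q ^ k) u = u := by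
      intro k u hu
      induction k with
      | zero => rfl
      | succ k ih => rw [pow_succ, Perm.mul_apply, ext_fix u hu, ih]
    have fI : ∀ (k : ℕ), ∀ u ∈ extSet p q, (gammaInt p q ^ k) u = u := by
      intro k u hu
      induction k with
      | zero => rfl
      | succ k ih => rw [pow_succ, Perm.mul_apply, int_fix u hu, ih]
    set g := gammaExt p q ^ i * gammaInt p q ^ j with hg
    have gx : g x = e := by rw [hg, Perm.mul_apply, fI j x hx, hi]
    have gy : g y = τ e := by rw [hg, Perm.mul_apply, hj, fE i _ hv]
    have gG : Good p q g := gE.mul gI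
    have h' : AnnNC p q (g⁻¹ * τ * g⁻¹⁻¹) := annNC_conj gG.inv h
    have hdisc := disc_of_normal h' x y (by simp [hxdef]; omega) rfl (by
      rw [Perm.mul_apply, Perm.mul_apply, inv_inv, gx, ← gy]
      exact Equiv.symm_apply_apply g y)
    have h1 := conj_pow_mem S _ hE i _ (conj_pow_mem S _ hI j _ (hD hdisc))
    convert h1 using 1
    rw [hg]
    group

end specific
end AnnHelp

/-- Theorem 5.1: `S_ann-nc(p,q)` is the smallest subset of `S([p+q])` containing
`S_disc-nc(p+q)` and invariant under conjugation with `γ_ext` and with `γ_int`. -/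
theorem stmt_11 (p q : ℕ) (hp : 0 < p) (hq : 0 < q) :
    {τ : Equiv.Perm (Fin (p + q)) | AnnNC p q τ} =
      ⋂₀ {S : Set (Equiv.Perm (Fin (p + q))) |
            {τ : Equiv.Perm (Fin (p + q)) | DiscNC τ} ⊆ S ∧
            (∀ τ ∈ S, gammaExt p q * τ * (gammaExt p q)⁻¹ ∈ S) ∧
            (∀ τ ∈ S, gammaInt p q * τ * (gammaInt p q)⁻¹ ∈ S)} := by
  apply Set.Subset.antisymm
  · rintro τ hτ S ⟨hD, hE, hI⟩
    exact AnnHelp.mem_of_annNC hτ S hD hE hI hp hq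
  · apply Set.sInter_subset_of_mem
    exact ⟨fun τ hτ => AnnHelp.disc_annNC hτ,
      fun τ hτ => AnnHelp.annNC_conj AnnHelp.good_ext hτ,
      fun τ hτ => AnnHelp.annNC_conj AnnHelp.good_int hτ⟩
end

section
/- Let p and q be positive integers and let τ ∈ S_ann-nc(p,q) be such that τ(p) = p+1. Then τ ∈ S_disc-nc(p+q). -/
theorem induced_eq_of {α : Type*} (f : α → α) (B : Set α) (b c : α) (k : ℕ) (hk : 0 < k)
    (hc : f^[k] b = c) (hB : c ∈ B) (hmin : ∀ j, 0 < j → j < k → f^[j] b ∉ B) :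
    induced f B b = c := by
  classical
  have hex : ∃ k, 0 < k ∧ f^[k] b ∈ B := ⟨k, hk, hc ▸ hB⟩
  have hfind : Nat.find hex = k := by
    rw [Nat.find_eq_iff]
    refine ⟨⟨hk, hc ▸ hB⟩, ?_⟩
    rintro j hj ⟨h0, h1⟩
    exact hmin j h0 hj h1
  unfold induced
  rw [dif_pos hex]
  convert hc
  
theorem induced_spec {α : Type*} [Finite α] (τ : Equiv.Perm α) (B : Set α) (b : α) (hb : b ∈ B) :
    ∃ k, 0 < k ∧ (⇑τ)^[k] b ∈ B ∧ (∀ j, 0 < j → j < k → (⇑τ)^[j] b ∉ B) ∧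
      induced (⇑τ) B b = (⇑τ)^[k] b := by
  classical
  have hex : ∃ k, 0 < k ∧ (⇑τ)^[k] b ∈ B := by
    refine ⟨orderOf τ, orderOf_pos τ, ?_⟩
    rw [← Equiv.Perm.coe_pow, pow_orderOf_eq_one]
    exact hb
  have h := Nat.find_spec hex
  refine ⟨Nat.find hex, h.1, h.2, ?_, ?_⟩
  · intro j h0 hj hm
    exact Nat.find_min hex hj ⟨h0, hm⟩
  · exact induced_eq_of _ _ _ _ _ h.1 rfl h.2 (fun j h0 hj hm => Nat.find_min hex hj ⟨h0, hm⟩)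

theorem induced_mem {α : Type*} [Finite α] (τ : Equiv.Perm α) (B : Set α) (b : α) (hb : b ∈ B) :
    induced (⇑τ) B b ∈ B ∧ τ.SameCycle b (induced (⇑τ) B b) := by
  obtain ⟨k, h0, h1, h2, h3⟩ := induced_spec τ B b hb
  rw [h3]
  refine ⟨h1, ⟨k, ?_⟩⟩
  rw [← Equiv.Perm.coe_pow, zpow_natCast]

theorem closed_all {α : Type*} [Finite α] (τ : Equiv.Perm α) (S T : Set α) (hTS : T ⊆ S)
    (hT : ∀ t ∈ T, induced (⇑τ) S t ∈ T) (a b : α) (ha : a ∈ T) (hb : b ∈ S)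
    (hab : τ.SameCycle a b) : b ∈ T := by
  obtain ⟨k, hk⟩ := hab.exists_nat_pow_eq
  rw [Equiv.Perm.coe_pow] at hk
  induction k using Nat.strong_induction_on generalizing a with
  | _ k ih =>
    rcases Nat.eq_zero_or_pos k with h0 | h0
    · subst h0
      simpa [← hk] using ha
    obtain ⟨m, m0, m1, m2, m3⟩ := induced_spec τ S a (hTS ha)
    have hmk : m ≤ k := by
      by_contra hlt
      exact m2 k h0 (by omega) (hk ▸ hb)
    have hmT : (⇑τ)^[m] a ∈ T := m3 ▸ hT a ha
    have e : (⇑τ)^[k - m] ((⇑τ)^[m] a) = b := by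
      rw [← Function.iterate_add_apply, Nat.sub_add_cancel hmk, hk]
    refine ih (k - m) (by omega) _ hmT ⟨((k - m : ℕ) : ℤ), ?_⟩ e
    rw [zpow_natCast, Equiv.Perm.coe_pow, e]

theorem swap_of {α : Type*} [Finite α] (τ : Equiv.Perm α) (S : Set α) (a c : α) (ha : a ∈ S)
    (hc : c ∈ S) (hac : τ.SameCycle a c) (hne : a ≠ c)
    (hS : ∀ s ∈ S, τ.SameCycle a s → s = a ∨ s = c) : induced (⇑τ) S a = c := by
  obtain ⟨h1, h2⟩ := induced_mem τ S a ha
  rcases hS _ h1 h2 with h | h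
  · exfalso
    have := closed_all τ S {a} (by simpa using ha) (by simp [h]) a c rfl hc hac
    exact hne this.symm
  · exact h

theorem cyc3_of {α : Type*} [Finite α] (τ : Equiv.Perm α) (S : Set α) (a b c : α) (ha : a ∈ S)
    (hb : b ∈ S) (hc : c ∈ S) (hab' : τ.SameCycle a b) (hac' : τ.SameCycle a c) (hab : a ≠ b)
    (hac : a ≠ c) (hbc : b ≠ c)
    (hS : ∀ s ∈ S, τ.SameCycle a s → s = a ∨ s = b ∨ s = c) (h : τ a = c) :
    MapsCyc3 (⇑τ) S a c b := by
  have e1 : induced (⇑τ) S a = c := induced_eq_of _ _ _ _ 1 (by omega) h hc (by intros; omega)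
  have e2 : induced (⇑τ) S c = b := by
    obtain ⟨h1, h2⟩ := induced_mem τ S c hc
    rcases hS _ h1 (hac'.trans h2) with h | h | h
    · have := closed_all τ S {a, c} (by rintro x (rfl | rfl) <;> assumption)
        (by rintro x (rfl | rfl) <;> simp [*]) a b (by simp) hb hab'
      simp at this; grind
    · exact h
    · have := closed_all τ S {c} (by simpa using hc) (by simp [h]) c a rfl ha hac'.symm
      exact absurd this hac
  have e3 : induced (⇑τ) S b = a := by
    obtain ⟨h1, h2⟩ := induced_mem τ S b hb
    rcases hS _ h1 (hab'.trans h2) with h | h | h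
    · exact h
    · have := closed_all τ S {b} (by simpa using hb) (by simp [h]) b a rfl ha hab'.symm
      exact absurd this hab
    · have := closed_all τ S {b, c} (by rintro x (rfl | rfl) <;> assumption)
        (by rintro x (rfl | rfl) <;> simp [*]) b a (by simp) ha hab'.symm
      simp at this; grind
  exact ⟨e1, e2, e3⟩

theorem induced_formPerm {α : Type*} [DecidableEq α] (l : List α) (hl : l.Nodup) (S : Set α)
    (i t : ℕ) (hi : i < l.length) (c : α) (ht : 0 < t) (hc : c ∈ S)
    (h : l[(i + t) % l.length]'(Nat.mod_lt _ (by omega)) = c)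
    (hmin : ∀ s, 0 < s → s < t → l[(i + s) % l.length]'(Nat.mod_lt _ (by omega)) ∉ S) :
    induced (⇑l.formPerm) S l[i] = c := by
  refine induced_eq_of _ _ _ _ t ht ?_ hc ?_
  · rw [← Equiv.Perm.coe_pow, List.formPerm_pow_apply_getElem _ hl, h]
  · intro j h0 h1
    rw [← Equiv.Perm.coe_pow, List.formPerm_pow_apply_getElem _ hl]
    exact hmin j h0 h1

theorem add_mod_cases (i s n : ℕ) (hi : i < n) (hs : s ≤ n) :
    (i + s < n ∧ (i + s) % n = i + s) ∨ (n ≤ i + s ∧ (i + s) % n = i + s - n) := by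
  rcases Nat.lt_or_ge (i + s) n with h | h
  · exact Or.inl ⟨h, Nat.mod_eq_of_lt h⟩
  · refine Or.inr ⟨h, ?_⟩
    rw [Nat.mod_eq_sub_mod h, Nat.mod_eq_of_lt (by omega)]

/-- indices version: the next element of `S` after position `i` is at position `j`. -/
theorem induced_formPerm_idx {α : Type*} [DecidableEq α] (l : List α) (hl : l.Nodup) (S : Set α)
    (i j : ℕ) (hi : i < l.length) (hj : j < l.length) (hc : l[j] ∈ S)
    (hmin : ∀ s, (hs : s < l.length) → l[s] ∈ S →
      (i < j → s ≤ i ∨ j ≤ s) ∧ (j ≤ i → j ≤ s ∧ s ≤ i)) :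
    induced (⇑l.formPerm) S l[i] = l[j] := by
  by_cases hij : i < j
  · refine induced_formPerm l hl S i (j - i) hi _ (by omega) hc ?_ ?_
    · congr 1
      rw [Nat.mod_eq_of_lt (by omega)]; omega
    · intro s h0 h1 hm
      have := hmin _ _ hm
      rcases add_mod_cases i s l.length hi (by omega) with ⟨_, e⟩ | ⟨_, e⟩ <;> rw [e] at this <;> omega
  · refine induced_formPerm l hl S i (l.length - i + j) hi _ (by omega) hc ?_ ?_
    · congr 1
      rcases add_mod_cases i (l.length - i + j) l.length hi (by omega) with ⟨_, e⟩ | ⟨_, e⟩ <;> omega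
    · intro s h0 h1 hm
      have := hmin _ _ hm
      rcases add_mod_cases i s l.length hi (by omega) with ⟨_, e⟩ | ⟨_, e⟩ <;> rw [e] at this <;> omega

theorem formPerm_cyc3 {α : Type*} [DecidableEq α] (l : List α) (hl : l.Nodup) (i j k : ℕ)
    (hij : i < j) (hjk : j < k) (hk : k < l.length) (a b c : α) (ha : l[i] = a) (hb : l[j] = b)
    (hc : l[k] = c) : MapsCyc3 (⇑l.formPerm) {a, b, c} a b c := by
  subst ha hb hc
  have key : ∀ s, (hs : s < l.length) → l[s] ∈ ({l[i], l[j], l[k]} : Set α) →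
      s = i ∨ s = j ∨ s = k := by
    intro s hs hm
    simpa [hl.getElem_inj_iff] using hm
  refine ⟨?_, ?_, ?_⟩ <;>
  · refine induced_formPerm_idx l hl _ _ _ _ _ (by simp) ?_
    intro s hs hm
    have := key s hs hm
    omega

theorem formPerm_cyc4 {α : Type*} [DecidableEq α] (l : List α) (hl : l.Nodup) (i j k m : ℕ)
    (hij : i < j) (hjk : j < k) (hkm : k < m) (hm : m < l.length) (a b c d : α) (ha : l[i] = a)
    (hb : l[j] = b) (hc : l[k] = c) (hd : l[m] = d) :
    MapsCyc4 (⇑l.formPerm) {a, b, c, d} a b c d := by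
  subst ha hb hc hd
  have key : ∀ s, (hs : s < l.length) → l[s] ∈ ({l[i], l[j], l[k], l[m]} : Set α) →
      s = i ∨ s = j ∨ s = k ∨ s = m := by
    intro s hs hm
    simpa [hl.getElem_inj_iff] using hm
  refine ⟨?_, ?_, ?_, ?_⟩ <;>
  · refine induced_formPerm_idx l hl _ _ _ _ _ (by simp) ?_
    intro s hs hm
    have := key s hs hm
    omega

theorem gammaExt_pow (p q : ℕ) (x : Fin (p + q)) (hx : (x : ℕ) < p) (k : ℕ) :
    (((gammaExt p q ^ k) x : Fin (p + q)) : ℕ) = (x + k) % p := by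
  have hn : ((List.finRange (p + q)).take p).Nodup :=
    (List.nodup_finRange _).sublist (List.take_sublist _ _)
  have hlen : ((List.finRange (p + q)).take p).length = p := by simp
  have := List.formPerm_pow_apply_getElem _ hn k x (by omega)
  simp only [hlen] at this
  simp at this
  unfold gammaExt
  rw [this]

theorem gammaInt_pow (p q : ℕ) (y : Fin (p + q)) (hy : p ≤ (y : ℕ)) (k : ℕ) :
    (((gammaInt p q ^ k) y : Fin (p + q)) : ℕ) = p + (y - p + k) % q := by
  have hn : ((List.finRange (p + q)).drop p).Nodup :=
    (List.nodup_finRange _).sublist (List.drop_sublist _ _)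
  have hlen : ((List.finRange (p + q)).drop p).length = q := by simp
  have := List.formPerm_pow_apply_getElem _ hn k (y - p) (by omega)
  simp only [hlen] at this
  simp [Nat.add_sub_cancel' hy] at this
  unfold gammaInt
  rw [this]

theorem gammaExt_fix (p q : ℕ) (x : Fin (p + q)) (hx : p ≤ (x : ℕ)) : gammaExt p q x = x := by
  apply List.formPerm_apply_of_notMem
  intro h
  obtain ⟨i, hi, h⟩ := List.getElem_of_mem h
  simp at hi h
  subst h
  simp at hx
  omega

theorem gammaInt_fix (p q : ℕ) (x : Fin (p + q)) (hx : (x : ℕ) < p) : gammaInt p q x = x := by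
  apply List.formPerm_apply_of_notMem
  intro h
  obtain ⟨i, hi, h⟩ := List.getElem_of_mem h
  simp at hi h
  subst h
  simp at hx

/-- `c` is the cyclic successor of `b` in `B`. -/
def CycNext {n : ℕ} (B : Set (Fin n)) (b c : Fin n) : Prop :=
  b ∈ B ∧ c ∈ B ∧ ((b < c ∧ ∀ s ∈ B, s ≤ b ∨ c ≤ s) ∨ (c ≤ b ∧ ∀ s ∈ B, c ≤ s ∧ s ≤ b))

theorem exists_cycNext {n : ℕ} (B : Set (Fin n)) (b : Fin n) (hb : b ∈ B) : ∃ c, CycNext B b c := by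
  by_cases h : ∃ s ∈ B, b < s
  · obtain ⟨c, hc, hmin⟩ := Set.exists_min_image {s | s ∈ B ∧ b < s} id (Set.toFinite _)
      (by obtain ⟨s, h1, h2⟩ := h; exact ⟨s, h1, h2⟩)
    refine ⟨c, hb, hc.1, Or.inl ⟨hc.2, ?_⟩⟩
    intro s hs
    by_cases hbs : b < s
    · exact Or.inr (hmin s ⟨hs, hbs⟩)
    · exact Or.inl (not_lt.mp hbs)
  · push Not at h
    obtain ⟨c, hc, hmin⟩ := Set.exists_min_image B id (Set.toFinite _) ⟨b, hb⟩
    exact ⟨c, hb, hc, Or.inr ⟨hmin b hb, fun s hs => ⟨hmin s hs, h s hs⟩⟩⟩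

theorem induced_of_cycNext {n : ℕ} (g : Fin n → Fin n) (L R : ℕ)
    (hg : ∀ i : Fin n, L ≤ (i : ℕ) → (i : ℕ) + 1 < R → (g i : ℕ) = i + 1)
    (hg' : ∀ i : Fin n, (i : ℕ) + 1 = R → (g i : ℕ) = L)
    (B : Set (Fin n)) (hB : ∀ s ∈ B, L ≤ (s : ℕ) ∧ (s : ℕ) < R) (b c : Fin n)
    (h : CycNext B b c) : induced g B b = c := by
  have up : ∀ (k : ℕ) (i : Fin n), L ≤ (i : ℕ) → (i : ℕ) + k < R → (g^[k] i : ℕ) = i + k := by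
    intro k
    induction k with
    | zero => intros; simp
    | succ k ih =>
      intro i h1 h2
      rw [Function.iterate_succ_apply', hg, ih] <;> try rw [ih]
      all_goals omega
  obtain ⟨hb, hc, h⟩ := h
  have hbB := hB b hb
  have hcB := hB c hc
  rcases h with ⟨hlt, hs⟩ | ⟨hle, hs⟩
  · rw [Fin.lt_def] at hlt
    refine induced_eq_of _ _ _ _ (c - b) (by omega) ?_ hc ?_
    · apply Fin.ext
      rw [up _ _ hbB.1 (by omega)]; omega
    · intro j h0 h1 hm
      have e := up j b hbB.1 (by omega)
      have := hs _ hm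
      simp only [Fin.le_def] at this
      omega
  · rw [Fin.le_def] at hle
    have top : (g^[R - 1 - b] b : ℕ) + 1 = R := by
      rw [up _ _ hbB.1 (by omega)]; omega
    have bot := hg' _ top
    rw [← Function.iterate_succ_apply' g] at bot
    have e : ∀ j, L + j < R → (g^[R - b + j] b : ℕ) = L + j := by
      intro j hj
      have : R - b + j = j + (R - 1 - b).succ := by omega
      rw [this, Function.iterate_add_apply, up, bot] <;> rw [bot]
      omega
    refine induced_eq_of _ _ _ _ (R - b + (c - L)) (by omega) ?_ hc ?_
    · apply Fin.ext
      rw [e _ (by omega)]; omega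
    · intro j h0 h1 hm
      have := hs _ hm
      simp only [Fin.le_def] at this
      by_cases hj : b + j < R
      · have e' := up j b hbB.1 hj
        omega
      · have e' := e (j - (R - b)) (by omega)
        rw [Nat.add_sub_cancel' (by omega)] at e'
        omega

theorem gammaExt_step (p q : ℕ) (i : Fin (p + q)) :
    ((i : ℕ) + 1 < p → (gammaExt p q i : ℕ) = i + 1) ∧
    ((i : ℕ) + 1 = p → (gammaExt p q i : ℕ) = 0) := by
  constructor
  · intro h
    have := gammaExt_pow p q i (by omega) 1
    rwa [pow_one, Nat.mod_eq_of_lt h] at this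
  · intro h
    have := gammaExt_pow p q i (by omega) 1
    rwa [pow_one, h, Nat.mod_self] at this

theorem gammaInt_step (p q : ℕ) (i : Fin (p + q)) (hi : p ≤ (i : ℕ)) :
    ((i : ℕ) + 1 < p + q → (gammaInt p q i : ℕ) = i + 1) ∧
    ((i : ℕ) + 1 = p + q → (gammaInt p q i : ℕ) = p) := by
  constructor
  · intro h
    have := gammaInt_pow p q i (by omega) 1
    rw [pow_one, Nat.mod_eq_of_lt (by omega)] at this
    omega
  · intro h
    have := gammaInt_pow p q i (by omega) 1
    rw [pow_one, (by omega : (i : ℕ) - p + 1 = q), Nat.mod_self] at this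
    omega

theorem induced_gammaExt (p q : ℕ) (B : Set (Fin (p + q))) (hB : B ⊆ extSet p q)
    (b c : Fin (p + q)) (h : CycNext B b c) : induced (⇑(gammaExt p q)) B b = c :=
  induced_of_cycNext _ 0 p (fun i _ h => (gammaExt_step p q i).1 h)
    (fun i h => (gammaExt_step p q i).2 h) B (fun s hs => ⟨Nat.zero_le _, hB hs⟩) b c h

theorem induced_gammaInt (p q : ℕ) (hq : 0 < q) (B : Set (Fin (p + q))) (hB : B ⊆ intSet p q)
    (b c : Fin (p + q)) (h : CycNext B b c) : induced (⇑(gammaInt p q)) B b = c :=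
  induced_of_cycNext _ p (p + q) (fun i h0 h => (gammaInt_step p q i h0).1 h)
    (fun i h => (gammaInt_step p q i (by omega)).2 h) B (fun s hs => ⟨hB hs, s.2⟩) b c h

theorem induced_gammaAnn_ext (p q : ℕ) (B : Set (Fin (p + q))) (hB : B ⊆ extSet p q)
    (b c : Fin (p + q)) (h : CycNext B b c) : induced (⇑(gammaAnn p q)) B b = c := by
  refine induced_of_cycNext _ 0 p (fun i _ h => ?_)
    (fun i h => ?_) B (fun s hs => ⟨Nat.zero_le _, hB hs⟩) b c h
  · rw [gammaAnn, Equiv.Perm.mul_apply, gammaInt_fix _ _ _ (by omega)]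
    exact (gammaExt_step p q i).1 h
  · rw [gammaAnn, Equiv.Perm.mul_apply, gammaInt_fix _ _ _ (by omega)]
    exact (gammaExt_step p q i).2 h

theorem induced_gammaAnn_int (p q : ℕ) (hq : 0 < q) (B : Set (Fin (p + q)))
    (hB : B ⊆ intSet p q)
    (b c : Fin (p + q)) (h : CycNext B b c) : induced (⇑(gammaAnn p q)) B b = c := by
  refine induced_of_cycNext _ p (p + q) (fun i h0 h => ?_)
    (fun i h => ?_) B (fun s hs => ⟨hB hs, s.2⟩) b c h
  · have := (gammaInt_step p q i h0).1 h
    rw [gammaAnn, Equiv.Perm.mul_apply, gammaExt_fix _ _ _ (by omega)]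
    exact this
  · have := (gammaInt_step p q i (by omega)).2 h
    rw [gammaAnn, Equiv.Perm.mul_apply, gammaExt_fix _ _ _ (by omega)]
    exact this

theorem induced_finRotate (n : ℕ) (B : Set (Fin n))
    (b c : Fin n) (h : CycNext B b c) : induced (⇑(finRotate n)) B b = c := by
  rcases n with _ | n
  · exact b.elim0
  refine induced_of_cycNext _ 0 (n + 1) (fun i _ h => ?_)
    (fun i h => ?_) B (fun s _ => ⟨Nat.zero_le _, s.2⟩) b c h
  · rw [coe_finRotate, if_neg]
    rw [Fin.ext_iff, Fin.val_last]; omega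
  · rw [coe_finRotate, if_pos]
    rw [Fin.ext_iff, Fin.val_last]; omega

/-- The list whose cycle is `lamPerm`. -/
def lamList (p q : ℕ) (x y : Fin (p + q)) : List (Fin (p + q)) :=
  ((List.range (p - 1)).map fun k => (gammaExt p q ^ (k + 1)) x) ++
    ((List.range (q - 1)).map fun k => (gammaInt p q ^ (k + 1)) y)

theorem mod_inj_aux (p x i j : ℕ) (hi : i < p) (hj : j < p) (h : (x + i) % p = (x + j) % p) :
    i = j := by
  have : i ≡ j [MOD p] := Nat.ModEq.add_left_cancel' x h
  exact Nat.ModEq.eq_of_lt_of_lt this hi hj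

theorem lamList_nodup (p q : ℕ) (hp : 0 < p) (hq : 0 < q) (x y : Fin (p + q)) (hx : (x : ℕ) < p) (hy : p ≤ (y : ℕ)) :
    (lamList p q x y).Nodup := by
  unfold lamList
  rw [List.nodup_append]
  refine ⟨?_, ?_, ?_⟩
  · refine List.Nodup.map_on ?_ List.nodup_range
    intro i hi j hj h
    have h := congrArg Fin.val h
    rw [gammaExt_pow _ _ _ hx, gammaExt_pow _ _ _ hx] at h
    rw [List.mem_range] at hi hj
    have := mod_inj_aux _ _ _ _ (by omega) (by omega) h
    omega
  · refine List.Nodup.map_on ?_ List.nodup_range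
    intro i hi j hj h
    have h := congrArg Fin.val h
    rw [gammaInt_pow _ _ _ hy, gammaInt_pow _ _ _ hy] at h
    rw [List.mem_range] at hi hj
    have := mod_inj_aux q (y - p) (i + 1) (j + 1) (by omega) (by omega) (by omega)
    omega
  · intro a ha b hb hab
    rw [List.mem_map] at ha hb
    obtain ⟨i, _, rfl⟩ := ha
    obtain ⟨j, _, rfl⟩ := hb
    have h := congrArg Fin.val hab
    rw [gammaExt_pow _ _ _ hx, gammaInt_pow _ _ _ hy] at h
    have := Nat.mod_lt (x + (i + 1)) hp
    omega

theorem lamList_length (p q : ℕ) (x y : Fin (p + q)) :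
    (lamList p q x y).length = (p - 1) + (q - 1) := by
  simp [lamList]

/-- position in `lamList`. -/
def lamPos (p q : ℕ) (x y z : ℕ) : ℕ :=
  if z < p then (if x < z then z - x - 1 else p - x + z - 1)
  else (p - 1) + (if y < z then z - y - 1 else p + q - y + (z - p) - 1)

theorem lamPos_spec (p q : ℕ) (x y z : Fin (p + q)) (hx : (x : ℕ) < p)
    (hy : p ≤ (y : ℕ)) (hzx : z ≠ x) (hzy : z ≠ y) :
    ∃ h : lamPos p q x y z < (lamList p q x y).length,
      (lamList p q x y)[lamPos p q x y z] = z := by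
  have hzx' : (z : ℕ) ≠ x := fun h => hzx (Fin.ext h)
  have hzy' : (z : ℕ) ≠ y := fun h => hzy (Fin.ext h)
  have hz := z.2
  have hl : lamPos p q x y z < (lamList p q x y).length := by
    rw [lamList_length]
    unfold lamPos
    split_ifs <;> omega
  refine ⟨hl, ?_⟩
  apply Fin.ext
  by_cases hzp : (z : ℕ) < p
  · have hlt : lamPos p q x y z < p - 1 := by
      unfold lamPos
      split_ifs <;> omega
    simp only [lamList]
    rw [List.getElem_append_left (by simpa using hlt)]
    simp only [List.getElem_map, List.getElem_range]
    rw [gammaExt_pow _ _ _ hx]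
    unfold lamPos
    rcases lt_or_ge (x : ℕ) z with h | h
    · rw [if_pos hzp, if_pos h, Nat.mod_eq_of_lt (by omega)]; omega
    · rw [if_pos hzp, if_neg (by omega), (by omega : (x : ℕ) + (p - x + z - 1 + 1) = z + p),
        Nat.add_mod_right, Nat.mod_eq_of_lt hzp]
  · have hlt : p - 1 ≤ lamPos p q x y z := by
      unfold lamPos
      split_ifs <;> omega
    simp only [lamList]
    rw [List.getElem_append_right (by simpa using hlt)]
    simp only [List.getElem_map, List.getElem_range, List.length_map, List.length_range]
    rw [gammaInt_pow _ _ _ hy]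
    unfold lamPos
    rcases lt_or_ge (y : ℕ) z with h | h
    · rw [if_neg hzp, if_pos h, Nat.mod_eq_of_lt (by omega)]; omega
    · rw [if_neg hzp, if_neg (by omega), (by omega : (y : ℕ) - p + (p - 1 + (p + q - y + (z - p) - 1) - (p - 1) + 1) = (z - p) + q),
        Nat.add_mod_right, Nat.mod_eq_of_lt (by omega)]
      omega

theorem lam_cyc3 (p q : ℕ) (hp : 0 < p) (hq : 0 < q) (x y a b c : Fin (p + q))
    (hx : (x : ℕ) < p) (hy : p ≤ (y : ℕ)) (hax : a ≠ x) (hay : a ≠ y) (hbx : b ≠ x) (hby : b ≠ y)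
    (hcx : c ≠ x) (hcy : c ≠ y) (h1 : lamPos p q x y a < lamPos p q x y b)
    (h2 : lamPos p q x y b < lamPos p q x y c) :
    MapsCyc3 (⇑(lamPerm p q x y)) {a, b, c} a b c := by
  obtain ⟨la, ea⟩ := lamPos_spec p q x y a hx hy hax hay
  obtain ⟨lb, eb⟩ := lamPos_spec p q x y b hx hy hbx hby
  obtain ⟨lc, ec⟩ := lamPos_spec p q x y c hx hy hcx hcy
  exact formPerm_cyc3 (lamList p q x y) (lamList_nodup p q hp hq x y hx hy) _ _ _ h1 h2 lc _ _ _
    ea eb ec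

theorem lam_cyc4 (p q : ℕ) (hp : 0 < p) (hq : 0 < q) (x y a b c d : Fin (p + q))
    (hx : (x : ℕ) < p) (hy : p ≤ (y : ℕ)) (hax : a ≠ x) (hay : a ≠ y) (hbx : b ≠ x) (hby : b ≠ y)
    (hcx : c ≠ x) (hcy : c ≠ y) (hdx : d ≠ x) (hdy : d ≠ y)
    (h1 : lamPos p q x y a < lamPos p q x y b)
    (h2 : lamPos p q x y b < lamPos p q x y c) (h3 : lamPos p q x y c < lamPos p q x y d) :
    MapsCyc4 (⇑(lamPerm p q x y)) {a, b, c, d} a b c d := by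
  obtain ⟨la, ea⟩ := lamPos_spec p q x y a hx hy hax hay
  obtain ⟨lb, eb⟩ := lamPos_spec p q x y b hx hy hbx hby
  obtain ⟨lc, ec⟩ := lamPos_spec p q x y c hx hy hcx hcy
  obtain ⟨ld, ed⟩ := lamPos_spec p q x y d hx hy hdx hdy
  exact formPerm_cyc4 (lamList p q x y) (lamList_nodup p q hp hq x y hx hy) _ _ _ _ h1 h2 h3 ld
    _ _ _ _ ea eb ec ed

theorem ac2_of (p q : ℕ) (hp : 0 < p) (hq : 0 < q) (τ : Equiv.Perm (Fin (p + q)))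
    (x y a b c : Fin (p + q)) (hx : (x : ℕ) < p) (hy : p ≤ (y : ℕ)) (hxy : τ.SameCycle x y)
    (hxa : ¬ τ.SameCycle x a) (hab : τ.SameCycle a b) (hac : τ.SameCycle a c)
    (h1 : lamPos p q x y a < lamPos p q x y b) (h2 : lamPos p q x y b < lamPos p q x y c)
    (h : τ a = c) : AC2 p q τ := by
  have hxb : ¬ τ.SameCycle x b := fun h => hxa (h.trans hab.symm)
  have hxc : ¬ τ.SameCycle x c := fun h => hxa (h.trans hac.symm)
  have nax : a ≠ x := by rintro rfl; exact hxa (Equiv.Perm.SameCycle.refl _ _)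
  have nbx : b ≠ x := by rintro rfl; exact hxb (Equiv.Perm.SameCycle.refl _ _)
  have ncx : c ≠ x := by rintro rfl; exact hxc (Equiv.Perm.SameCycle.refl _ _)
  have nay : a ≠ y := by rintro rfl; exact hxa hxy
  have nby : b ≠ y := by rintro rfl; exact hxb hxy
  have ncy : c ≠ y := by rintro rfl; exact hxc hxy
  have nab : a ≠ b := by rintro rfl; omega
  have nac : a ≠ c := by rintro rfl; omega
  have nbc : b ≠ c := by rintro rfl; omega
  have nxy : x ≠ y := by rintro rfl; omega
  refine ⟨a, b, c, x, y, by simp [*], hx, hy,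
    lam_cyc3 p q hp hq x y a b c hx hy nax nay nbx nby ncx ncy h1 h2, ?_, ?_, ?_⟩
  · refine cyc3_of τ _ a b c (by simp) (by simp) (by simp) hab hac nab nac nbc ?_ h
    rintro s (rfl | rfl | rfl | rfl | rfl) hs
    · simp
    · simp
    · simp
    · exact absurd hs.symm hxa
    · exact absurd (hxy.trans hs.symm) hxa
  · refine swap_of τ _ x y (by simp) (by simp) hxy nxy ?_
    rintro s (rfl | rfl | rfl | rfl | rfl) hs
    · exact absurd hs hxa
    · exact absurd hs hxb
    · exact absurd hs hxc
    · simp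
    · simp
  · refine swap_of τ _ y x (by simp) (by simp) hxy.symm nxy.symm ?_
    rintro s (rfl | rfl | rfl | rfl | rfl) hs
    · exact absurd (hxy.trans hs) hxa
    · exact absurd (hxy.trans hs) hxb
    · exact absurd (hxy.trans hs) hxc
    · simp
    · simp

theorem ne_of_not_sameCycle {α : Type*} (τ : Equiv.Perm α) {a b : α} (h : ¬ τ.SameCycle a b) :
    a ≠ b := by
  rintro rfl
  exact h (Equiv.Perm.SameCycle.refl _ _)

theorem swap_of' {α : Type*} [Finite α] (τ : Equiv.Perm α) (S : Set α) (a c : α) (ha : a ∈ S)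
    (hc : c ∈ S) (hac : τ.SameCycle a c) (hne : a ≠ c)
    (hS : ∀ s ∈ S, s = a ∨ s = c ∨ ¬ τ.SameCycle a s) :
    induced (⇑τ) S a = c ∧ induced (⇑τ) S c = a := by
  constructor
  · refine swap_of τ S a c ha hc hac hne ?_
    intro s hs h
    have := hS s hs
    tauto
  · refine swap_of τ S c a hc ha hac.symm hne.symm ?_
    intro s hs h
    have := hS s hs
    have := hac.trans h
    tauto

theorem ac3_of (p q : ℕ) (hp : 0 < p) (hq : 0 < q) (τ : Equiv.Perm (Fin (p + q)))
    (x y a b c d : Fin (p + q)) (hx : (x : ℕ) < p) (hy : p ≤ (y : ℕ)) (hxy : τ.SameCycle x y)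
    (hxa : ¬ τ.SameCycle x a) (hxb : ¬ τ.SameCycle x b) (hab : ¬ τ.SameCycle a b)
    (hac : τ.SameCycle a c) (hbd : τ.SameCycle b d)
    (h1 : lamPos p q x y a < lamPos p q x y b) (h2 : lamPos p q x y b < lamPos p q x y c)
    (h3 : lamPos p q x y c < lamPos p q x y d) : AC3 p q τ := by
  have hxc : ¬ τ.SameCycle x c := fun h => hxa (h.trans hac.symm)
  have hxd : ¬ τ.SameCycle x d := fun h => hxb (h.trans hbd.symm)
  have hyc : ∀ s, ¬ τ.SameCycle x s → ¬ τ.SameCycle y s := fun s h h' => h (hxy.trans h')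
  have had : ¬ τ.SameCycle a d := fun h => hab (h.trans hbd.symm)
  have hbc : ¬ τ.SameCycle b c := fun h => hab (hac.trans h.symm)
  have nab : a ≠ b := by rintro rfl; omega
  have nac : a ≠ c := by rintro rfl; omega
  have nad : a ≠ d := by rintro rfl; omega
  have nbc : b ≠ c := by rintro rfl; omega
  have nbd : b ≠ d := by rintro rfl; omega
  have ncd : c ≠ d := by rintro rfl; omega
  have nxy : x ≠ y := by rintro rfl; omega
  have nax := (ne_of_not_sameCycle τ hxa).symm
  have nbx := (ne_of_not_sameCycle τ hxb).symm
  have ncx := (ne_of_not_sameCycle τ hxc).symm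
  have ndx := (ne_of_not_sameCycle τ hxd).symm
  have nay := (ne_of_not_sameCycle τ (hyc _ hxa)).symm
  have nby := (ne_of_not_sameCycle τ (hyc _ hxb)).symm
  have ncy := (ne_of_not_sameCycle τ (hyc _ hxc)).symm
  have ndy := (ne_of_not_sameCycle τ (hyc _ hxd)).symm
  have hax : ¬ τ.SameCycle a x := fun h => hxa h.symm
  have hay : ¬ τ.SameCycle a y := fun h => hyc _ hxa h.symm
  have hbx : ¬ τ.SameCycle b x := fun h => hxb h.symm
  have hby : ¬ τ.SameCycle b y := fun h => hyc _ hxb h.symm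
  have hba : ¬ τ.SameCycle b a := fun h => hab h.symm
  have e1 := swap_of' τ {a, b, c, d, x, y} a c (by simp) (by simp) hac nac (by
    rintro s (rfl | rfl | rfl | rfl | rfl | rfl) <;> tauto)
  have e2 := swap_of' τ {a, b, c, d, x, y} b d (by simp) (by simp) hbd nbd (by
    rintro s (rfl | rfl | rfl | rfl | rfl | rfl) <;> tauto)
  have e3 := swap_of' τ {a, b, c, d, x, y} x y (by simp) (by simp) hxy nxy (by
    rintro s (rfl | rfl | rfl | rfl | rfl | rfl) <;> tauto)
  exact ⟨a, b, c, d, x, y, by simp [*], hx, hy,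
    lam_cyc4 p q hp hq x y a b c d hx hy nax nay nbx nby ncx ncy ndx ndy h1 h2 h3,
    ⟨e1.1, e1.2, e2.1, e2.2⟩, e3⟩

theorem ac1_of (p q : ℕ) (hq : 0 < q) (τ : Equiv.Perm (Fin (p + q)))
    (a b c d : Fin (p + q)) (hs : (d : ℕ) < p ∨ p ≤ (a : ℕ)) (h1 : a < b) (h2 : b < c) (h3 : c < d)
    (hac : τ.SameCycle a c) (hbd : τ.SameCycle b d) (hab : ¬ τ.SameCycle a b) : AC1 p q τ := by
  have had : ¬ τ.SameCycle a d := fun h => hab (h.trans hbd.symm)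
  have hbc : ¬ τ.SameCycle b c := fun h => hab (hac.trans h.symm)
  have hba : ¬ τ.SameCycle b a := fun h => hab h.symm
  have nab : a ≠ b := by rintro rfl; order
  have nac : a ≠ c := by rintro rfl; order
  have nad : a ≠ d := by rintro rfl; order
  have nbc : b ≠ c := by rintro rfl; order
  have nbd : b ≠ d := by rintro rfl; order
  have ncd : c ≠ d := by rintro rfl; order
  have e1 := swap_of' τ {a, b, c, d} a c (by simp) (by simp) hac nac (by
    rintro s (rfl | rfl | rfl | rfl) <;> tauto)
  have e2 := swap_of' τ {a, b, c, d} b d (by simp) (by simp) hbd nbd (by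
    rintro s (rfl | rfl | rfl | rfl) <;> tauto)
  have key : ∀ u v, CycNext {a, b, c, d} u v → induced (⇑(gammaAnn p q)) {a, b, c, d} u = v := by
    intro u v h
    rcases hs with hs | hs
    · refine induced_gammaAnn_ext p q _ ?_ u v h
      rintro s (rfl | rfl | rfl | rfl) <;> simp only [extSet, Set.mem_ofPred_eq] <;> omega
    · refine induced_gammaAnn_int p q hq _ ?_ u v h
      rintro s (rfl | rfl | rfl | rfl) <;> simp only [intSet, Set.mem_ofPred_eq] <;> omega
  refine ⟨a, b, c, d, by simp [*], ⟨key _ _ ?_, key _ _ ?_, key _ _ ?_, key _ _ ?_⟩,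
    ⟨e1.1, e1.2, e2.1, e2.2⟩⟩
  · refine ⟨by simp, by simp, Or.inl ⟨h1, ?_⟩⟩
    rintro s (rfl | rfl | rfl | rfl) <;> omega
  · refine ⟨by simp, by simp, Or.inl ⟨h2, ?_⟩⟩
    rintro s (rfl | rfl | rfl | rfl) <;> omega
  · refine ⟨by simp, by simp, Or.inl ⟨h3, ?_⟩⟩
    rintro s (rfl | rfl | rfl | rfl) <;> omega
  · refine ⟨by simp, by simp, Or.inr ⟨by omega, ?_⟩⟩
    rintro s (rfl | rfl | rfl | rfl) <;> omega

theorem noGap (p q : ℕ) (hp : 0 < p) (hq : 0 < q)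
    (τ : Equiv.Perm (Fin (p + q))) (h : AnnNC p q τ) (P Q : Fin (p + q)) (hP : (P : ℕ) = p - 1)
    (hQ : (Q : ℕ) = p) (hτ : τ P = Q) (a m : Fin (p + q)) (ha : (a : ℕ) < p)
    (hta : p ≤ (τ a : ℕ)) (hm : τ.SameCycle a m) : m ≤ a ∨ τ a ≤ m := by
  have hPQ : τ.SameCycle P Q := ⟨1, by simpa using hτ⟩
  have hata : τ.SameCycle a (τ a) := ⟨1, by simp⟩
  by_cases hO : τ.SameCycle P a
  · have hu := (h.1.2 {b | τ.SameCycle P b} ⟨P, rfl⟩ ⟨a, hO, ha⟩ ⟨Q, hPQ, hQ.ge⟩).1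
    have : a = P := hu.unique ⟨⟨hO, ha⟩, hta⟩
      ⟨⟨Equiv.Perm.SameCycle.refl _ _, show (P : ℕ) < p by omega⟩, by
        rw [hτ]; exact hQ.ge⟩
    subst this
    rw [hτ]
    simp only [Fin.le_def]
    omega
  · by_contra hcon
    push Not at hcon
    obtain ⟨h1, h2⟩ := hcon
    have nmP : (m : ℕ) ≠ P := by
      intro e; rw [← Fin.ext_iff] at e; subst e; exact hO hm.symm
    have nmQ : (m : ℕ) ≠ Q := by
      intro e; rw [← Fin.ext_iff] at e; subst e; exact hO (hPQ.trans hm.symm)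
    have ntQ : (τ a : ℕ) ≠ Q := by
      intro e; rw [← Fin.ext_iff] at e; rw [e] at hata; exact hO (hPQ.trans hata.symm)
    have naP : (a : ℕ) ≠ P := by
      intro e; rw [← Fin.ext_iff] at e; subst e; exact hO (Equiv.Perm.SameCycle.refl _ _)
    rw [Fin.lt_def] at h1 h2
    refine h.2.2.1 (ac2_of p q hp hq τ P Q a m (τ a) (by omega) hQ.ge hPQ hO hm hata ?_ ?_ rfl)
    · unfold lamPos; split_ifs <;> omega
    · unfold lamPos; split_ifs <;> omega

theorem cycNext_ext (p q : ℕ) (τ : Equiv.Perm (Fin (p + q))) (h : AnnStandard p q τ)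
    (b : Fin (p + q)) (hb : (b : ℕ) < p) (htb : (τ b : ℕ) < p) :
    CycNext ({s | τ.SameCycle b s} ∩ extSet p q) b (τ b) := by
  have hm : b ∈ {s | τ.SameCycle b s} ∩ extSet p q := ⟨Equiv.Perm.SameCycle.refl _ _, hb⟩
  obtain ⟨c, hc⟩ := exists_cycNext _ b hm
  have e := (h.1 _ ⟨b, rfl⟩).1 b hm
  have hmt : τ b ∈ {s | τ.SameCycle b s} ∩ extSet p q := ⟨⟨1, by simp⟩, htb⟩
  rw [induced_gammaExt p q _ Set.inter_subset_right b c hc] at e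
  rw [induced_eq_of (⇑τ) _ b (τ b) 1 one_pos rfl hmt (by intros; omega)] at e
  rwa [e]

theorem cycNext_int (p q : ℕ) (hq : 0 < q) (τ : Equiv.Perm (Fin (p + q))) (h : AnnStandard p q τ)
    (b : Fin (p + q)) (hb : p ≤ (b : ℕ)) (htb : p ≤ (τ b : ℕ)) :
    CycNext ({s | τ.SameCycle b s} ∩ intSet p q) b (τ b) := by
  have hm : b ∈ {s | τ.SameCycle b s} ∩ intSet p q := ⟨Equiv.Perm.SameCycle.refl _ _, hb⟩
  obtain ⟨c, hc⟩ := exists_cycNext _ b hm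
  have e := (h.1 _ ⟨b, rfl⟩).2 b hm
  have hmt : τ b ∈ {s | τ.SameCycle b s} ∩ intSet p q := ⟨⟨1, by simp⟩, htb⟩
  rw [induced_gammaInt p q hq _ Set.inter_subset_right b c hc] at e
  rw [induced_eq_of (⇑τ) _ b (τ b) 1 one_pos rfl hmt (by intros; omega)] at e
  rwa [e]

theorem cycNext_all (p q : ℕ) (hq : 0 < q) (τ : Equiv.Perm (Fin (p + q)))
    (h : AnnStandard p q τ)
    (F : ∀ a m : Fin (p + q), (a : ℕ) < p → p ≤ (τ a : ℕ) → τ.SameCycle a m → m ≤ a ∨ τ a ≤ m)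
    (b : Fin (p + q)) : CycNext {s | τ.SameCycle b s} b (τ b) := by
  have hbb : τ.SameCycle b b := Equiv.Perm.SameCycle.refl _ _
  have hbt : τ.SameCycle b (τ b) := ⟨1, by simp⟩
  refine ⟨hbb, hbt, ?_⟩
  rcases lt_or_ge (b : ℕ) p with hb | hb <;> rcases lt_or_ge (τ b : ℕ) p with ht | ht
  · obtain ⟨-, -, ⟨hlt, hs⟩ | ⟨hle, hs⟩⟩ := cycNext_ext p q τ h b hb ht
    · refine Or.inl ⟨hlt, fun s hsA => ?_⟩
      rcases lt_or_ge (s : ℕ) p with h' | h'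
      · exact hs s ⟨hsA, h'⟩
      · right; rw [Fin.le_def]; omega
    · refine Or.inr ⟨hle, fun s hsA => ?_⟩
      rcases lt_or_ge (s : ℕ) p with h' | h'
      · exact hs s ⟨hsA, h'⟩
      · exfalso
        obtain ⟨a, ⟨⟨haA, hae⟩, hti⟩, -⟩ := (h.2 _ ⟨b, rfl⟩ ⟨b, hbb, hb⟩ ⟨s, hsA, h'⟩).1
        have hti : p ≤ (τ a : ℕ) := hti
        have h1 := F a b hae hti (Equiv.Perm.SameCycle.symm haA)
        have h2 := (hs a ⟨haA, hae⟩).2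
        have : a = b := by
          apply Fin.ext
          simp only [Fin.le_def] at h1 h2
          omega
        subst this
        omega
  · refine Or.inl ⟨?_, fun s hs => F b s hb ht hs⟩
    rw [Fin.lt_def]; omega
  · refine Or.inr ⟨?_, fun s hsA => ?_⟩
    · rw [Fin.le_def]; omega
    · rcases lt_or_ge (s : ℕ) p with h' | h'
      · refine ⟨?_, by rw [Fin.le_def]; omega⟩
        by_contra hcon
        push Not at hcon
        obtain ⟨w, ⟨hwA, hwp, hwt⟩, hmax⟩ := Set.exists_max_image
          {w : Fin (p + q) | τ.SameCycle b w ∧ (w : ℕ) < p ∧ w < τ b} id (Set.toFinite _)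
          ⟨s, hsA, h', hcon⟩
        have hwb : τ.SameCycle w (τ b) := hwA.symm.trans hbt
        rcases lt_or_ge (τ w : ℕ) p with hw | hw
        · have hwtw : τ.SameCycle w (τ w) := ⟨1, by simp⟩
          obtain ⟨-, -, ⟨hlt, hs⟩ | ⟨hle, hs⟩⟩ := cycNext_ext p q τ h w hwp hw
          · have h1 := hs (τ b) ⟨hwb, ht⟩
            have h2 : ¬ τ w < τ b := by
              intro hlt'
              have := hmax (τ w) ⟨hwA.trans hwtw, hw, hlt'⟩
              simp only [id] at this
              order
            have : τ w = τ b := by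
              rcases h1 with h1 | h1 <;> order
            have := τ.injective this
            subst this
            omega
          · have := (hs (τ b) ⟨hwb, ht⟩).2
            order
        · have := F w (τ b) hwp hw hwb
          simp only [Fin.le_def] at this
          rw [Fin.lt_def] at hwt
          omega
      · refine ⟨by rw [Fin.le_def]; omega, ?_⟩
        by_contra hcon
        push Not at hcon
        obtain ⟨w, ⟨hwA, hwp, hwt⟩, hmin⟩ := Set.exists_min_image
          {w : Fin (p + q) | τ.SameCycle b w ∧ p ≤ (w : ℕ) ∧ b < w} id (Set.toFinite _)
          ⟨s, hsA, h', hcon⟩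
        obtain ⟨z, rfl⟩ := τ.surjective w
        have hzt : τ.SameCycle z (τ z) := ⟨1, by simp⟩
        have hzb : τ.SameCycle z b := hzt.trans hwA.symm
        rcases lt_or_ge (z : ℕ) p with hz | hz
        · have := F z b hz hwp hzb
          simp only [Fin.le_def] at this
          rw [Fin.lt_def] at hwt
          omega
        · obtain ⟨-, -, ⟨hlt, hs⟩ | ⟨hle, hs⟩⟩ := cycNext_int p q hq τ h z hz hwp
          · have h1 := hs b ⟨hzb, hb⟩
            have h2 : ¬ b < z := by
              intro hlt'
              have := hmin z ⟨hzb.symm, hz, hlt'⟩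
              simp only [id] at this
              order
            have : z = b := by
              rcases h1 with h1 | h1 <;> order
            subst this
            omega
          · have := (hs b ⟨hzb, hb⟩).1
            order
  · obtain ⟨-, -, ⟨hlt, hs⟩ | ⟨hle, hs⟩⟩ := cycNext_int p q hq τ h b hb ht
    · refine Or.inl ⟨hlt, fun s hsA => ?_⟩
      rcases lt_or_ge (s : ℕ) p with h' | h'
      · left; rw [Fin.le_def]; omega
      · exact hs s ⟨hsA, h'⟩
    · refine Or.inr ⟨hle, fun s hsA => ?_⟩
      rcases lt_or_ge (s : ℕ) p with h' | h'
      · exfalso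
        obtain ⟨a, ⟨⟨haA, hae⟩, hti⟩, -⟩ := (h.2 _ ⟨b, rfl⟩ ⟨s, hsA, h'⟩ ⟨b, hbb, hb⟩).1
        have hti : p ≤ (τ a : ℕ) := hti
        have hae : (a : ℕ) < p := hae
        have haA : τ.SameCycle b a := haA
        have h1 := F a (τ b) hae hti (haA.symm.trans hbt)
        have h2 := (hs (τ a) ⟨haA.trans ⟨1, by simp⟩, hti⟩).1
        have : τ a = τ b := by
          apply Fin.ext
          simp only [Fin.le_def] at h1 h2
          omega
        have := τ.injective this
        subst this
        omega
      · exact hs s ⟨hsA, h'⟩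

theorem noCross_special (p q : ℕ) (hp : 0 < p) (hq : 0 < q)
    (τ : Equiv.Perm (Fin (p + q))) (h : AnnNC p q τ) (P Q : Fin (p + q)) (hP : (P : ℕ) = p - 1)
    (hQ : (Q : ℕ) = p) (hτ : τ P = Q) (u v w z : Fin (p + q)) (huv : τ.SameCycle u v)
    (hPu : ¬ τ.SameCycle P u) (hPw : τ.SameCycle P w) (hPz : τ.SameCycle P z)
    (h1 : u < w) (h2 : w < v) (h3 : z < u ∨ v < z) : False := by
  have hPQ : τ.SameCycle P Q := ⟨1, by simpa using hτ⟩
  have hPv : ¬ τ.SameCycle P v := fun h => hPu (h.trans huv.symm)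
  have nuP : (u : ℕ) ≠ P := by
    intro e; rw [← Fin.ext_iff] at e; exact ne_of_not_sameCycle τ hPu e.symm
  have nvP : (v : ℕ) ≠ P := by
    intro e; rw [← Fin.ext_iff] at e; exact ne_of_not_sameCycle τ hPv e.symm
  have nuQ : (u : ℕ) ≠ Q := by
    intro e; rw [← Fin.ext_iff] at e; subst e; exact hPu hPQ
  have nvQ : (v : ℕ) ≠ Q := by
    intro e; rw [← Fin.ext_iff] at e; subst e; exact hPv hPQ
  have hvlt := v.2
  simp only [Fin.lt_def] at h1 h2 h3
  rcases lt_or_ge (v : ℕ) p with hv | hv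
  · refine h.2.1 (ac1_of p q hq τ u w v P (Or.inl (by omega)) h1 h2 ?_ huv hPw.symm ?_)
    · rw [Fin.lt_def]; omega
    · exact fun h => hPu (hPw.trans h.symm)
  rcases lt_or_ge (u : ℕ) p with hu | hu
  · refine h.2.2.1 (ac2_of p q hp hq τ u v P z Q hu hv huv (fun h => hPu h.symm) hPz hPQ ?_ ?_ hτ)
    · unfold lamPos; split_ifs <;> omega
    · unfold lamPos; split_ifs <;> omega
  · refine h.2.1 (ac1_of p q hq τ Q u w v (Or.inr hQ.ge) ?_ h1 h2 (hPQ.symm.trans hPw) huv ?_)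
    · rw [Fin.lt_def]; omega
    · exact fun h => hPu (hPQ.trans h)

/-- Lemma 5.2 3°: if `τ ∈ S_ann-nc(p,q)` and `τ(p) = p+1` (in 0-indexed terms,
`τ(p-1) = p`), then `τ ∈ S_disc-nc(p+q)`. -/
theorem stmt_14 (p q : ℕ) (hp : 0 < p) (hq : 0 < q)
    (τ : Equiv.Perm (Fin (p + q))) (h : AnnNC p q τ)
    (hτ : τ ⟨p - 1, by omega⟩ = ⟨p, by omega⟩) :
    DiscNC τ := by
  obtain ⟨P, hP⟩ : ∃ P : Fin (p + q), P = ⟨p - 1, by omega⟩ := ⟨_, rfl⟩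
  obtain ⟨Q, hQ⟩ : ∃ Q : Fin (p + q), Q = ⟨p, by omega⟩ := ⟨_, rfl⟩
  rw [← hP, ← hQ] at hτ
  have hP : (P : ℕ) = p - 1 := by rw [hP]
  have hQ : (Q : ℕ) = p := by rw [hQ]
  have hPQ : τ.SameCycle P Q := ⟨1, by simpa using hτ⟩
  constructor
  · rintro A ⟨e, rfl⟩ b hb
    have hA : {s | τ.SameCycle e s} = {s | τ.SameCycle b s} := by
      ext s
      exact ⟨fun hs => (Equiv.Perm.SameCycle.symm hb).trans hs,
        fun hs => Equiv.Perm.SameCycle.trans hb hs⟩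
    rw [hA, induced_finRotate _ _ b (τ b) (cycNext_all p q hq τ h.1
      (fun a m => noGap p q hp hq τ h P Q hP hQ hτ a m) b)]
    exact induced_eq_of (⇑τ) _ b (τ b) 1 one_pos rfl ⟨1, by simp⟩ (by intros; omega)
  · rintro ⟨a, b, c, d, h1, h2, h3, hac, hbd, hab⟩
    by_cases hPa : τ.SameCycle P a
    · exact noCross_special p q hp hq τ h P Q hP hQ hτ b d c a hbd
        (fun h => hab (hPa.symm.trans h)) (hPa.trans hac) hPa h2 h3 (Or.inl h1)
    by_cases hPb : τ.SameCycle P b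
    · exact noCross_special p q hp hq τ h P Q hP hQ hτ a c b d hac
        hPa hPb (hPb.trans hbd) h1 h2 (Or.inr h3)
    have key : ∀ s, ¬ τ.SameCycle P s → (s : ℕ) ≠ p - 1 ∧ (s : ℕ) ≠ p := by
      intro s hs
      constructor
      · intro e
        rw [← hP, ← Fin.ext_iff] at e
        exact ne_of_not_sameCycle τ hs e.symm
      · intro e
        have e' : s = Q := Fin.ext (e.trans hQ.symm)
        exact hs (e' ▸ hPQ)
    have ka := key a hPa
    have kb := key b hPb
    have kc := key c (fun h => hPa (h.trans hac.symm))
    have kd := key d (fun h => hPb (h.trans hbd.symm))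
    simp only [Fin.lt_def] at h1 h2 h3
    have mono : ∀ s t : Fin (p + q), ((s : ℕ) ≠ p - 1 ∧ (s : ℕ) ≠ p) →
        ((t : ℕ) ≠ p - 1 ∧ (t : ℕ) ≠ p) → (s : ℕ) < t → lamPos p q P Q s < lamPos p q P Q t := by
      intro s t hs ht hst
      unfold lamPos; split_ifs <;> omega
    exact h.2.2.2 (ac3_of p q hp hq τ P Q a b c d (by omega) hQ.ge hPQ hPa hPb hab hac hbd
      (mono _ _ ka kb h1) (mono _ _ kb kc h2) (mono _ _ kc kd h3))
end
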